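/- Up to homeomorphism there are only countably many closed 3-manifolds: there exists a countable family of compact connected topological 3-manifolds without boundary such that every compact connected topological 3-manifold without boundary is homeomorphic to a member of the family. -/

import Mathlib

/-- A bundled closed 3-manifold: a compact connected topological 3-manifold without
boundary. -/
structure Closed3Manifold where
  carrier : Type
  [top : TopologicalSpace carrier]
  [t2 : T2Space carrier]
  [secondCountable : SecondCountableTopology carrier]
  [charted : ChartedSpace (EuclideanSpace ℝ (Fin 3)) carrier]
  [compact : CompactSpace carrier]
  [conn : ConnectedSpace carrier]

attribute [instance] Closed3Manifold.top Closed3Manifold.t2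
  Closed3Manifold.secondCountable Closed3Manifold.charted
  Closed3Manifold.compact Closed3Manifold.conn

/-!
Cover a closed manifold `M` by finitely many charts `ℝⁿ → M` whose unit balls cover it, and record,
only up to a grid of mesh `1 / (m + 1)`, which pairs of points in the balls of radius `4` have the
same image. This is a finite piece of data, and for large `m` it determines `M`: if the charts of
`N` have nearly the same coincidences, an open embedding `M → N` near the identity in all charts is
built chart by chart, at the price of shrinking the radius. In the next chart the embedding
constructed so far is a map near the identity defined on an open set; it agrees on a compact subset
with a homeomorphism of all of `ℝⁿ` near the identity, which extends it over the new chart.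

This extension is a form of the deformation theorem of Černavskiĭ and of Edwards and Kirby, proved
cube by cube over a fine grid, through the cubes of increasing dimension. At a cube `f` has to be
straightened on a slab bounded in the normal directions. For a single direction, conjugating the
unit translation by `f` only near the hyperplane `x i = 0` gives a homeomorphism `P` of `ℝⁿ`, and
`x ↦ P ^ ⌊x i⌋ (f (x - ⌊x i⌋ eᵢ))` is a homeomorphism which agrees with `f` near this hyperplane.
Each further direction is reduced to the previous ones by lifting `f` through `z ↦ exp z - 1` in two
coordinates, which turns one of the two bounded directions into an unbounded one.
-/

open Set Metric Topology

universe u v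

section NearInverse

variable {X : Type*} [PseudoMetricSpace X] {Ω : Set X} {ε : ℝ} {f g : X → X}

/-- Two maps, continuous and `ε`-close to the identity on `Ω`, which are inverse to each other as
far as this makes sense inside `Ω`. Carrying the inverse along as an everywhere defined function
encodes an open embedding `Ω → X` near the identity without using invariance of domain. -/
structure NearInverseOn (ε : ℝ) (f g : X → X) (Ω : Set X) : Prop where
  continuousOn_left : ContinuousOn f Ω
  continuousOn_right : ContinuousOn g Ω
  dist_left_le : ∀ x ∈ Ω, dist (f x) x ≤ ε
  dist_right_le : ∀ x ∈ Ω, dist (g x) x ≤ ε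
  right_left : ∀ x ∈ Ω, f x ∈ Ω → g (f x) = x
  left_right : ∀ x ∈ Ω, g x ∈ Ω → f (g x) = x

namespace NearInverseOn

theorem symm (h : NearInverseOn ε f g Ω) : NearInverseOn ε g f Ω :=
  ⟨h.continuousOn_right, h.continuousOn_left, h.dist_right_le, h.dist_left_le, h.left_right,
    h.right_left⟩

theorem mono {Ω' : Set X} {ε' : ℝ} (h : NearInverseOn ε f g Ω) (hΩ : Ω' ⊆ Ω) (hε : ε ≤ ε') :
    NearInverseOn ε' f g Ω' :=
  ⟨h.continuousOn_left.mono hΩ, h.continuousOn_right.mono hΩ,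
    fun x hx => (h.dist_left_le x (hΩ hx)).trans hε,
    fun x hx => (h.dist_right_le x (hΩ hx)).trans hε,
    fun x hx hfx => h.right_left x (hΩ hx) (hΩ hfx),
    fun x hx hgx => h.left_right x (hΩ hx) (hΩ hgx)⟩

theorem eqOn_right_id {D : Set X} (h : NearInverseOn ε f g Ω) (hf : EqOn f id (Ω ∩ D)) :
    EqOn g id (Ω ∩ D) := fun x hx => by
  have hfx : f x = x := hf hx
  simpa [hfx] using h.right_left x hx.1 (hfx.symm ▸ hx.1)

theorem isOpen_image (h : NearInverseOn ε f g Ω) (hΩ : IsOpen Ω) {O : Set X} (hO : IsOpen O)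
    (hOΩ : O ⊆ Ω) (hf : MapsTo f O Ω) : IsOpen (f '' O) := by
  have : f '' O = Ω ∩ g ⁻¹' O := by
    ext y
    constructor
    · rintro ⟨x, hx, rfl⟩
      exact ⟨hf hx, by rwa [mem_preimage, h.right_left x (hOΩ hx) (hf hx)]⟩
    · rintro ⟨hy, hgy⟩
      exact ⟨g y, hgy, h.left_right y hy (hOΩ hgy)⟩
  rw [this]
  exact h.continuousOn_right.isOpen_inter_preimage hΩ hO

theorem conj (h : NearInverseOn ε f g Ω) {Y : Type*} [PseudoMetricSpace Y] {K : NNReal}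
    (A : X ≃ₜ Y) (hA : LipschitzWith K A) :
    NearInverseOn (K * ε) (A ∘ f ∘ A.symm) (A ∘ g ∘ A.symm) (A.symm ⁻¹' Ω) where
  continuousOn_left := A.continuous.comp_continuousOn
    (h.continuousOn_left.comp A.symm.continuous.continuousOn fun _ hx => hx)
  continuousOn_right := A.continuous.comp_continuousOn
    (h.continuousOn_right.comp A.symm.continuous.continuousOn fun _ hx => hx)
  dist_left_le x hx := by
    simpa using hA.dist_le_mul_of_le (h.dist_left_le _ hx)
  dist_right_le x hx := by
    simpa using hA.dist_le_mul_of_le (h.dist_right_le _ hx)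
  right_left x hx hfx := by
    simp only [mem_preimage, Function.comp_apply, A.symm_apply_apply] at hfx ⊢
    rw [h.right_left _ hx hfx, A.apply_symm_apply]
  left_right x hx hgx := by
    simp only [mem_preimage, Function.comp_apply, A.symm_apply_apply] at hgx ⊢
    rw [h.left_right _ hx hgx, A.apply_symm_apply]

theorem symm_comp {δ : ℝ} (h : NearInverseOn ε f g Ω) (F : X ≃ₜ X) (hF : ∀ x, dist (F x) x ≤ δ) :
    NearInverseOn (ε + δ) (F.symm ∘ f) (g ∘ F) (Ω ∩ F ⁻¹' Ω) where
  continuousOn_left :=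
    F.symm.continuous.comp_continuousOn (h.continuousOn_left.mono inter_subset_left)
  continuousOn_right :=
    h.continuousOn_right.comp F.continuous.continuousOn fun _ hx => hx.2
  dist_left_le x hx := by
    have hsymm : dist (F.symm (f x)) (f x) ≤ δ := by simpa [dist_comm] using hF (F.symm (f x))
    exact (dist_triangle _ (f x) _).trans (by
      rw [Function.comp_apply]
      linarith [h.dist_left_le x hx.1])
  dist_right_le x hx :=
    (dist_triangle _ (F x) _).trans (add_le_add (h.dist_right_le _ hx.2) (hF x))
  right_left x hx hfx := by
    have : f x ∈ Ω := by simpa using hfx.2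
    simpa using h.right_left x hx.1 this
  left_right x hx hgx := by
    simp only [Function.comp_apply, h.left_right _ hx.2 hgx.1, F.symm_apply_apply]

open scoped Classical in
theorem piecewise_id {U W D : Set X} (h : NearInverseOn ε f g U) (hε : 0 ≤ ε) (hU : IsOpen U)
    (hW : W ⊆ interior D ∪ U) (hD : EqOn f id (U ∩ D)) (hgD : EqOn g id (U ∩ D))
    (hf : ∀ x ∈ U \ D, f x ∈ W → f x ∈ U) (hg : ∀ x ∈ U \ D, g x ∈ W → g x ∈ U) :
    NearInverseOn ε (D.piecewise id f) (D.piecewise id g) W := by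
  have cont {k : X → X} (hk : ContinuousOn k U) (hkD : EqOn k id (U ∩ D)) :
      ContinuousOn (D.piecewise id k) W := by
    refine fun x hx => ContinuousAt.continuousWithinAt ?_
    rcases hW hx with hx | hx
    · refine continuousAt_id.congr ?_
      filter_upwards [isOpen_interior.mem_nhds hx] with y hy
      rw [piecewise_eq_of_mem _ _ _ (interior_subset hy)]
    · refine (hk.continuousAt (hU.mem_nhds hx)).congr ?_
      filter_upwards [hU.mem_nhds hx] with y hy
      by_cases hyD : y ∈ D
      · rw [piecewise_eq_of_mem _ _ _ hyD, hkD ⟨hy, hyD⟩]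
      · rw [piecewise_eq_of_notMem _ _ _ hyD]
  have memU {x : X} (hx : x ∈ W) (hxD : x ∉ D) : x ∈ U :=
    (hW hx).resolve_left fun h => hxD (interior_subset h)
  have near {k : X → X} (hk : ∀ x ∈ U, dist (k x) x ≤ ε) (x : X) (hx : x ∈ W) :
      dist (D.piecewise id k x) x ≤ ε := by
    by_cases hxD : x ∈ D
    · rwa [piecewise_eq_of_mem _ _ _ hxD, id, dist_self]
    · rw [piecewise_eq_of_notMem _ _ _ hxD]
      exact hk x (memU hx hxD)
  have inv {k l : X → X} (hlk : ∀ x ∈ U, k x ∈ U → l (k x) = x) (hl : EqOn l id (U ∩ D))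
      (hk : ∀ x ∈ U \ D, k x ∈ W → k x ∈ U) (x : X) (hx : x ∈ W)
      (hkx : D.piecewise id k x ∈ W) : D.piecewise id l (D.piecewise id k x) = x := by
    by_cases hxD : x ∈ D
    · rw [piecewise_eq_of_mem _ _ _ hxD, id, piecewise_eq_of_mem _ _ _ hxD, id]
    · rw [piecewise_eq_of_notMem _ _ _ hxD] at hkx ⊢
      have hkU := hk x ⟨memU hx hxD, hxD⟩ hkx
      have hlkx := hlk x (memU hx hxD) hkU
      by_cases hkD : k x ∈ D
      · rwa [piecewise_eq_of_mem _ _ _ hkD, ← hl ⟨hkU, hkD⟩]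
      · rwa [piecewise_eq_of_notMem _ _ _ hkD]
  exact ⟨cont h.continuousOn_left hD, cont h.continuousOn_right hgD, near h.dist_left_le,
    near h.dist_right_le, inv h.right_left hgD hf, inv h.left_right hD hg⟩

/-- The open partial homeomorphism `f` with inverse `g`. Its source consists of the points of `Ω`
which `f` maps back into `Ω`. -/
@[simps]
def toOpenPartialHomeomorph (h : NearInverseOn ε f g Ω) (hΩ : IsOpen Ω) :
    OpenPartialHomeomorph X X where
  toFun := f
  invFun := g
  source := Ω ∩ f ⁻¹' Ω
  target := Ω ∩ g ⁻¹' Ω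
  map_source' x hx := ⟨hx.2, by rw [mem_preimage, h.right_left x hx.1 hx.2]; exact hx.1⟩
  map_target' x hx := ⟨hx.2, by rw [mem_preimage, h.left_right x hx.1 hx.2]; exact hx.1⟩
  left_inv' x hx := h.right_left x hx.1 hx.2
  right_inv' x hx := h.left_right x hx.1 hx.2
  open_source := h.continuousOn_left.isOpen_inter_preimage hΩ hΩ
  open_target := h.continuousOn_right.isOpen_inter_preimage hΩ hΩ
  continuousOn_toFun := h.continuousOn_left.mono inter_subset_left
  continuousOn_invFun := h.continuousOn_right.mono inter_subset_left

end NearInverseOn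

end NearInverse

section NearIdentity

variable {E : Type*} [NormedAddCommGroup E] [NormedSpace ℝ E] [ProperSpace E]

theorem mem_image_ball_of_dist_le {f : E → E} {y : E} {r ε : ℝ} (hε : 0 ≤ ε) (hr : 2 * ε < r)
    (hc : ContinuousOn f (closedBall y r)) (ho : IsOpen (f '' ball y r))
    (hf : ∀ x ∈ closedBall y r, dist (f x) x ≤ ε) : y ∈ f '' ball y r := by
  have hclosed : IsClosed (f '' closedBall y r) :=
    ((isCompact_closedBall y r).image_of_continuousOn hc).isClosed
  have hsub : ball y (r - ε) ∩ f '' closedBall y r ⊆ f '' ball y r := by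
    rintro _ ⟨hz, x, hx, rfl⟩
    refine ⟨x, ?_, rfl⟩
    have := dist_triangle_left x y (f x)
    have := hf x hx
    rw [mem_ball] at hz ⊢
    linarith
  have hy : y ∈ ball y (r - ε) := mem_ball_self (by linarith)
  have hfy : f y ∈ ball y (r - ε) := by
    have := hf y (mem_closedBall_self (by linarith))
    rw [mem_ball]
    linarith
  have hcover : ball y (r - ε) ⊆ f '' ball y r ∪ (f '' closedBall y r)ᶜ := fun z hz =>
    or_iff_not_imp_right.2 fun hz' => hsub ⟨hz, not_not.1 hz'⟩
  refine (convex_ball y (r - ε)).isPreconnected.subset_left_of_subset_union ho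
    hclosed.isOpen_compl (disjoint_compl_right_iff_subset.2 (image_mono ball_subset_closedBall))
    hcover ⟨f y, hfy, y, mem_ball_self (by linarith), rfl⟩ hy

theorem exists_homeomorph_eq_of_dist_le {f : E → E} {b : ℝ} (hc : Continuous f)
    (hi : Function.Injective f) (ho : IsOpenMap f) (hb : ∀ x, dist (f x) x ≤ b) :
    ∃ F : E ≃ₜ E, ⇑F = f := by
  have hb0 : 0 ≤ b := dist_nonneg.trans (hb 0)
  have hs : Function.Surjective f := fun y => by
    obtain ⟨x, -, hx⟩ := mem_image_ball_of_dist_le (r := 2 * b + 1) hb0 (by linarith)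
      hc.continuousOn (ho (ball y _) isOpen_ball) fun x _ => hb x
    exact ⟨x, hx⟩
  exact ⟨(Equiv.ofBijective f ⟨hi, hs⟩).toHomeomorphOfContinuousOpen hc ho, rfl⟩

end NearIdentity

section IdAdd

variable {E : Type*} [NormedAddCommGroup E] {p : E → E} {K : NNReal}

theorem antilipschitzWith_id_add (hp : LipschitzWith K p) (hK : K < 1) :
    AntilipschitzWith (1 - K)⁻¹ (fun x => x + p x) := by
  simpa using AntilipschitzWith.id.add_lipschitzWith hp (by simpa using hK)

variable [NormedSpace ℝ E]

theorem approximatesLinearOn_id_add (hp : LipschitzWith K p) :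
    ApproximatesLinearOn (fun x => x + p x) (ContinuousLinearEquiv.refl ℝ E : E →L[ℝ] E) univ K :=
  fun x _ y _ => by simpa [add_sub_add_comm] using hp.norm_sub_le x y

variable [CompleteSpace E]

/-- The homeomorphism `x ↦ x + p x` given by a contraction `p`. -/
noncomputable def idAddHomeomorph (hp : LipschitzWith K p) (hK : K < 1) : E ≃ₜ E :=
  (approximatesLinearOn_id_add hp).toHomeomorph _ <| by
    refine (subsingleton_or_nontrivial E).imp_right fun (_ : Nontrivial E) => ?_
    have : ‖((ContinuousLinearEquiv.refl ℝ E).symm : E →L[ℝ] E)‖₊ = 1 := by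
      exact ContinuousLinearMap.nnnorm_id
    rwa [this, inv_one]

theorem idAddHomeomorph_apply (hp : LipschitzWith K p) (hK : K < 1) (x : E) :
    idAddHomeomorph hp hK x = x + p x := rfl

end IdAdd

section ExtendConj

variable {X Y : Type*} [TopologicalSpace X] [TopologicalSpace Y] (e : OpenPartialHomeomorph X Y)
  {T : X ≃ₜ X} {K : Set X}

open scoped Classical in
/-- The conjugate of `T` by a partial homeomorphism `e`, extended by the identity. -/
noncomputable def conjExtend (T : X → X) : Y → Y :=
  fun y => if y ∈ e.target then e (T (e.symm y)) else y

variable {e}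

theorem conjExtend_of_mem {T : X → X} {y : Y} (hy : y ∈ e.target) :
    conjExtend e T y = e (T (e.symm y)) :=
  if_pos hy

theorem conjExtend_of_notMem_image {T : X → X} (hT : ∀ x ∉ K, T x = x) {y : Y} (hy : y ∉ e '' K) :
    conjExtend e T y = y := by
  by_cases hye : y ∈ e.target
  · rw [conjExtend_of_mem hye, hT _ fun h => hy ⟨_, h, e.right_inv hye⟩, e.right_inv hye]
  · exact if_neg hye

theorem mapsTo_of_eq_off (hT : ∀ x ∉ K, T x = x) {s : Set X} (hK : K ⊆ s) : MapsTo T s s := by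
  intro x hx
  by_contra hTx
  have := T.injective (hT _ fun h => hTx (hK h))
  exact hTx (this.symm ▸ hx)

theorem symm_apply_eq_off (hT : ∀ x ∉ K, T x = x) (x : X) (hx : x ∉ K) : T.symm x = x := by
  rw [T.symm_apply_eq, hT x hx]

theorem continuous_conjExtend (hK : K ⊆ e.source) (hcl : IsClosed (e '' K))
    (hT : ∀ x ∉ K, T x = x) : Continuous (conjExtend e T) := by
  rw [continuous_iff_continuousAt]
  intro y
  by_cases hy : y ∈ e '' K
  · have hye : e.target ∈ 𝓝 y :=
      e.open_target.mem_nhds (image_subset_iff.2 (hK.trans e.mapsTo) hy)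
    have hcont : ContinuousOn (e ∘ T ∘ e.symm) e.target :=
      e.continuousOn.comp (T.continuous.comp_continuousOn e.continuousOn_symm)
        ((mapsTo_of_eq_off hT hK).comp e.symm.mapsTo)
    refine (hcont.continuousAt hye).congr ?_
    filter_upwards [hye] with z hz using (conjExtend_of_mem hz).symm
  · refine continuousAt_id.congr ?_
    filter_upwards [hcl.isOpen_compl.mem_nhds hy] with z hz
    exact (conjExtend_of_notMem_image hT hz).symm

theorem conjExtend_symm_conjExtend (hK : K ⊆ e.source) (hT : ∀ x ∉ K, T x = x) (y : Y) :
    conjExtend e T.symm (conjExtend e T y) = y := by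
  by_cases hy : y ∈ e.target
  · have hTy : T (e.symm y) ∈ e.source := mapsTo_of_eq_off hT hK (e.map_target hy)
    rw [conjExtend_of_mem hy, conjExtend_of_mem (e.map_source hTy), e.left_inv hTy,
      T.symm_apply_apply, e.right_inv hy]
  · have h {S : X → X} : conjExtend e S y = y := if_neg hy
    rw [h, h]

/-- `conjExtend e T` as a homeomorphism, when `T` is supported in a set `K` inside the source of
`e` with closed image. -/
noncomputable def conjExtendHomeomorph (hK : K ⊆ e.source) (hcl : IsClosed (e '' K))
    (hT : ∀ x ∉ K, T x = x) : Y ≃ₜ Y where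
  toFun := conjExtend e T
  invFun := conjExtend e T.symm
  left_inv := conjExtend_symm_conjExtend hK hT
  right_inv := conjExtend_symm_conjExtend (T := T.symm) hK (symm_apply_eq_off hT)
  continuous_toFun := continuous_conjExtend hK hcl hT
  continuous_invFun := continuous_conjExtend (T := T.symm) hK hcl (symm_apply_eq_off hT)

end ExtendConj

section Slide

/-- A cutoff function, `0` for `|t| ≤ 2` and `1` for `4 ≤ |t|`. -/
noncomputable def ramp (t : ℝ) : ℝ := max 0 (min 1 (2⁻¹ * (|t| - 2)))

theorem ramp_nonneg (t : ℝ) : 0 ≤ ramp t := le_max_left _ _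

theorem ramp_le_one (t : ℝ) : ramp t ≤ 1 := max_le zero_le_one (min_le_left _ _)

theorem ramp_of_abs_le {t : ℝ} (ht : |t| ≤ 2) : ramp t = 0 :=
  max_eq_left ((min_le_right _ _).trans (by linarith))

theorem ramp_of_le_abs {t : ℝ} (ht : 4 ≤ |t|) : ramp t = 1 := by
  rw [ramp, min_eq_left (by linarith), max_eq_right zero_le_one]

theorem lipschitzWith_ramp : LipschitzWith 2⁻¹ ramp := by
  refine (LipschitzWith.of_dist_le_mul fun s t => ?_).const_min 1 |>.const_max 0
  rw [Real.dist_eq, Real.dist_eq, ← mul_sub, sub_sub_sub_cancel_right, abs_mul]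
  simpa using abs_abs_sub_abs_le s t

/-- A homeomorphism of `ℝ` fixing `[-2, 2]` and translating by `1` outside `[-4, 4]`. -/
noncomputable def outerSlide : ℝ ≃ₜ ℝ :=
  idAddHomeomorph lipschitzWith_ramp (inv_lt_one_of_one_lt₀ one_lt_two)

/-- A homeomorphism of `ℝ` translating `[-2, 2]` by `1` and fixing the complement of `[-6, 6]`. It
is chosen such that `innerSlide ∘ outerSlide` is the translation by `1`. -/
noncomputable def innerSlide : ℝ ≃ₜ ℝ :=
  outerSlide.symm.trans (Homeomorph.addRight 1)

theorem outerSlide_apply (t : ℝ) : outerSlide t = t + ramp t := rfl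

theorem le_outerSlide (t : ℝ) : t ≤ outerSlide t :=
  le_add_of_nonneg_right (ramp_nonneg t)

theorem outerSlide_le (t : ℝ) : outerSlide t ≤ t + 1 :=
  add_le_add_right (ramp_le_one t) t

theorem outerSlide_of_abs_le {t : ℝ} (ht : |t| ≤ 2) : outerSlide t = t := by
  rw [outerSlide_apply, ramp_of_abs_le ht, add_zero]

theorem outerSlide_of_le_abs {t : ℝ} (ht : 4 ≤ |t|) : outerSlide t = t + 1 := by
  rw [outerSlide_apply, ramp_of_le_abs ht]

theorem innerSlide_apply (t : ℝ) : innerSlide t = outerSlide.symm t + 1 := rfl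

theorem innerSlide_outerSlide (t : ℝ) : innerSlide (outerSlide t) = t + 1 := by
  rw [innerSlide_apply, outerSlide.symm_apply_apply]

theorem le_innerSlide (t : ℝ) : t ≤ innerSlide t := by
  obtain ⟨r, rfl⟩ := outerSlide.surjective t
  rw [innerSlide_outerSlide]
  exact outerSlide_le r

theorem innerSlide_of_abs_le {t : ℝ} (ht : |t| ≤ 2) : innerSlide t = t + 1 := by
  rw [← innerSlide_outerSlide, outerSlide_of_abs_le ht]

theorem innerSlide_of_le_abs {t : ℝ} (ht : 6 ≤ |t|) : innerSlide t = t := by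
  have h4 : 4 ≤ |t - 1| := by
    have := abs_sub_abs_le_abs_sub t 1
    rw [abs_one] at this
    linarith
  rw [← sub_add_cancel t 1, ← outerSlide_of_le_abs h4, innerSlide_outerSlide,
    outerSlide_of_le_abs h4]

theorem lipschitzWith_innerSlide : LipschitzWith 2 innerSlide := by
  have h : AntilipschitzWith 2 outerSlide := by
    have h2 : (1 - 2⁻¹ : NNReal)⁻¹ = 2 := by
      rw [← NNReal.coe_inj, NNReal.coe_inv, NNReal.coe_sub (inv_le_one_of_one_le₀ one_le_two)]
      norm_num
    exact h2 ▸ antilipschitzWith_id_add lipschitzWith_ramp (inv_lt_one_of_one_lt₀ one_lt_two)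
  refine LipschitzWith.of_dist_le_mul fun t t' => ?_
  rw [innerSlide_apply, innerSlide_apply, dist_add_right]
  exact (h.to_rightInverse outerSlide.apply_symm_apply).dist_le_mul t t'

end Slide

section Slab

variable {n : ℕ} {i : Fin n} {S : Finset (Fin n)} {a b : ℝ} {x y : Fin n → ℝ}

/-- The product of an open cube in the coordinates from `S` with the space of all others. -/
def slab (S : Finset (Fin n)) (a : ℝ) : Set (Fin n → ℝ) := {x | ∀ i ∈ S, |x i| < a}

theorem mem_slab_singleton : x ∈ slab {i} a ↔ |x i| < a := by simp [slab]

theorem slab_subset_slab {S' : Finset (Fin n)} (hS : S' ⊆ S) (hab : a ≤ b) : slab S a ⊆ slab S' b :=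
  fun _ hx i hi => (hx i (hS hi)).trans_le hab

theorem isOpen_slab (S : Finset (Fin n)) (a : ℝ) : IsOpen (slab S a) := by
  simp only [slab, ofPred_forall]
  exact isOpen_biInter_finset fun i _ => isOpen_lt (by fun_prop) continuous_const

theorem abs_apply_sub_apply_le {δ : ℝ} (h : dist x y ≤ δ) (i : Fin n) : |x i - y i| ≤ δ :=
  (dist_le_pi_dist x y i).trans h

theorem dist_update_le {δ s t : ℝ} (h : dist x y ≤ δ) (hst : |s - t| ≤ δ) :
    dist (Function.update x i s) (Function.update y i t) ≤ δ := by
  refine (dist_pi_le_iff (dist_nonneg.trans h)).2 fun j => ?_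
  rcases eq_or_ne j i with rfl | hj
  · simpa [Real.dist_eq] using hst
  · simpa [hj] using (dist_le_pi_dist x y j).trans h

/-- A union of translates of the coordinate subspace `ℝ^S`. -/
def IsCylinder (S : Finset (Fin n)) (D : Set (Fin n → ℝ)) : Prop :=
  ∀ x ∈ D, ∀ y, (∀ j ∉ S, y j = x j) → y ∈ D

theorem IsCylinder.update_mem {D : Set (Fin n → ℝ)} (hD : IsCylinder S D) (hi : i ∈ S) (hx : x ∈ D)
    (t : ℝ) : Function.update x i t ∈ D :=
  hD x hx _ fun _ hj => Function.update_of_ne (ne_of_mem_of_not_mem hi hj).symm _ _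

theorem IsCylinder.add_single_mem {D : Set (Fin n → ℝ)} (hD : IsCylinder S D) (hi : i ∈ S)
    (hx : x ∈ D) (t : ℝ) : x + Pi.single i t ∈ D :=
  hD x hx _ fun j hj => by simp [(ne_of_mem_of_not_mem hi hj).symm]

/-- The homeomorphism applying `φ` to the `i`-th coordinate. -/
def mapCoord (i : Fin n) (φ : ℝ ≃ₜ ℝ) : (Fin n → ℝ) ≃ₜ (Fin n → ℝ) where
  toFun x := Function.update x i (φ (x i))
  invFun x := Function.update x i (φ.symm (x i))
  left_inv x := by simp
  right_inv x := by simp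
  continuous_toFun := continuous_id.update i (φ.continuous.comp (continuous_apply i))
  continuous_invFun := continuous_id.update i (φ.symm.continuous.comp (continuous_apply i))

variable {φ : ℝ ≃ₜ ℝ}

theorem mapCoord_apply (x : Fin n → ℝ) : mapCoord i φ x = Function.update x i (φ (x i)) := rfl

theorem mapCoord_apply_self (x : Fin n → ℝ) : mapCoord i φ x i = φ (x i) := by
  simp [mapCoord_apply]

theorem mapCoord_eq_self (h : φ (x i) = x i) : mapCoord i φ x = x := by
  rw [mapCoord_apply, h, Function.update_eq_self]

theorem mapCoord_eq_add_single {t : ℝ} (h : φ (x i) = x i + t) :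
    mapCoord i φ x = x + Pi.single i t := by
  rw [mapCoord_apply, h]
  ext j
  rcases eq_or_ne j i with rfl | hj <;> simp [*]

theorem mapCoord_innerSlide_mapCoord_outerSlide (x : Fin n → ℝ) :
    mapCoord i innerSlide (mapCoord i outerSlide x) = x + Pi.single i 1 := by
  rw [← mapCoord_eq_add_single (φ := Homeomorph.addRight 1) (by simp)]
  simp [mapCoord_apply, innerSlide_outerSlide]

theorem mapCoord_innerSlide_eq_self (x : Fin n → ℝ) (hx : x ∉ {x | |x i| ≤ 6}) :
    mapCoord i innerSlide x = x :=
  mapCoord_eq_self (innerSlide_of_le_abs (not_le.1 hx).le)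

theorem abs_apply_add_one_lt_of_mapCoord (hx : |mapCoord i outerSlide x i| < 10) :
    |x i + 1| < 11 := by
  have h1 := le_outerSlide (x i)
  have h2 := outerSlide_le (x i)
  rw [mapCoord_apply_self, abs_lt] at hx
  refine abs_lt.2 ⟨by linarith, ?_⟩
  by_contra h10
  rw [outerSlide_of_le_abs (le_abs.2 (Or.inl (by linarith)))] at hx
  linarith

end Slab

namespace NearInverseOn

variable {n : ℕ} {i : Fin n} {ε : ℝ} {f g : (Fin n → ℝ) → Fin n → ℝ} {x y : Fin n → ℝ}

theorem nonneg {S : Finset (Fin n)} {a : ℝ} (ha : 0 < a) (h : NearInverseOn ε f g (slab S a)) :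
    0 ≤ ε :=
  dist_nonneg.trans (h.dist_left_le 0 fun i _ => by simpa using ha)

variable (h : NearInverseOn ε f g (slab {i} 20)) (hε : ε ≤ 1 / 1000)

include h hε

theorem abs_left_apply_sub_le (hx : |x i| < 20) : |f x i - x i| ≤ 1 / 1000 :=
  abs_apply_sub_apply_le ((h.dist_left_le x (mem_slab_singleton.2 hx)).trans hε) i

theorem abs_left_apply_lt {r : ℝ} (hx : |x i| < r) (hr : r ≤ 20) : |f x i| < r + 1 / 1000 := by
  have := abs_left_apply_sub_le h hε (hx.trans_le hr)
  have := abs_sub_abs_le_abs_sub (f x i) (x i)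
  linarith

theorem right_left_of_abs_lt (hx : |x i| < 19) : g (f x) = x :=
  h.right_left x (mem_slab_singleton.2 (by linarith))
    (mem_slab_singleton.2 (by linarith [abs_left_apply_lt h hε hx (by norm_num)]))

theorem isClosed_image_abs_le : IsClosed (f '' {x | |x i| ≤ 6}) := by
  have hK : f '' {x | |x i| ≤ 6} = {y | |y i| ≤ 7} ∩ g ⁻¹' {x | |x i| ≤ 6} := by
    ext y
    constructor
    · rintro ⟨x, hx : |x i| ≤ 6, rfl⟩
      have := abs_left_apply_lt h hε (x := x) (r := 6.1) (by linarith) (by norm_num)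
      refine ⟨show |f x i| ≤ 7 by linarith, ?_⟩
      rwa [mem_preimage, right_left_of_abs_lt h hε (by linarith)]
    · rintro ⟨hy : |y i| ≤ 7, hgy⟩
      exact ⟨g y, hgy, right_left_of_abs_lt h.symm hε (by linarith)⟩
  have hclosed (r : ℝ) : IsClosed {x : Fin n → ℝ | |x i| ≤ r} :=
    isClosed_le (by fun_prop) continuous_const
  rw [hK]
  refine (h.continuousOn_right.mono fun y (hy : |y i| ≤ 7) => ?_).preimage_isClosed_of_isClosed
    (hclosed 7) (hclosed 6)
  exact mem_slab_singleton.2 (by linarith)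

/-- The translation by `1` of the `i`-th coordinate near the hyperplane `x i = 0`, seen through
`f`. -/
noncomputable def innerTwist : (Fin n → ℝ) ≃ₜ (Fin n → ℝ) :=
  conjExtendHomeomorph (e := h.toOpenPartialHomeomorph (isOpen_slab _ _))
    (T := mapCoord i innerSlide) (K := {x | |x i| ≤ 6})
    (fun x (hx : |x i| ≤ 6) => ⟨mem_slab_singleton.2 (by linarith), mem_slab_singleton.2 <| by
      linarith [abs_left_apply_lt h hε (x := x) (r := 7) (by linarith) (by norm_num)]⟩)
    (isClosed_image_abs_le h hε) mapCoord_innerSlide_eq_self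

theorem innerTwist_of_abs_lt (hy : |y i| < 10) :
    h.innerTwist hε y = f (mapCoord i innerSlide (g y)) :=
  conjExtend_of_mem ⟨mem_slab_singleton.2 (by linarith), mem_slab_singleton.2 <| by
    linarith [abs_left_apply_lt h.symm hε hy (by norm_num)]⟩

theorem innerTwist_of_le_abs (hy : 10 ≤ |y i|) : h.innerTwist hε y = y := by
  refine conjExtend_of_notMem_image mapCoord_innerSlide_eq_self ?_
  rintro ⟨x, hx : |x i| ≤ 6, rfl⟩
  have := abs_left_apply_lt h hε (x := x) (r := 7) (by linarith) (by norm_num)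
  exact hy.not_gt (this.trans (by norm_num))

/-- A homeomorphism near the translation by `1` of the `i`-th coordinate, agreeing with it away
from `x i = 0` and conjugate to it through `f` near `x i = 0`. -/
noncomputable def twistedShift : (Fin n → ℝ) ≃ₜ (Fin n → ℝ) :=
  (mapCoord i outerSlide).trans (h.innerTwist hε)

theorem twistedShift_of_mapCoord_le {y : Fin n → ℝ} (hy : 10 ≤ |mapCoord i outerSlide y i|) :
    h.twistedShift hε y = y + Pi.single i 1 := by
  rw [← mapCoord_innerSlide_mapCoord_outerSlide,
    mapCoord_eq_self (innerSlide_of_le_abs (by linarith))]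
  exact innerTwist_of_le_abs h hε hy

theorem twistedShift_of_le_abs (hy : 11 ≤ |y i|) : h.twistedShift hε y = y + Pi.single i 1 := by
  refine twistedShift_of_mapCoord_le h hε ?_
  rw [mapCoord_apply_self, outerSlide_of_le_abs (by linarith)]
  have := abs_sub_abs_le_abs_add (y i) 1
  rw [abs_one] at this
  linarith

theorem twistedShift_left (hx : |x i| ≤ 3 / 2) :
    h.twistedShift hε (f x) = f (x + Pi.single i 1) := by
  have hfx := abs_left_apply_lt h hε (x := x) (r := 1.9) (by linarith) (by norm_num)
  change h.innerTwist hε (mapCoord i outerSlide (f x)) = _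
  rw [mapCoord_eq_self (outerSlide_of_abs_le (by linarith)),
    innerTwist_of_abs_lt h hε (by linarith), right_left_of_abs_lt h hε (by linarith),
    mapCoord_eq_add_single (innerSlide_of_abs_le (by linarith))]

theorem dist_twistedShift_le (y : Fin n → ℝ) :
    dist (h.twistedShift hε y) (y + Pi.single i 1) ≤ 4 * ε := by
  have hε0 : 0 ≤ ε := h.nonneg (by norm_num)
  rcases le_or_gt 10 |mapCoord i outerSlide y i| with hy | hy
  · rw [twistedShift_of_mapCoord_le h hε hy, dist_self]
    positivity
  change dist (h.innerTwist hε (mapCoord i outerSlide y)) _ ≤ _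
  rw [innerTwist_of_abs_lt h hε hy, ← mapCoord_innerSlide_mapCoord_outerSlide]
  have hy' := abs_apply_add_one_lt_of_mapCoord hy
  set w := mapCoord i outerSlide y with hw
  have hgw : dist (g w) w ≤ ε := h.dist_right_le w (mem_slab_singleton.2 (by linarith))
  have hslide : dist (mapCoord i innerSlide (g w)) (mapCoord i innerSlide w) ≤ 2 * ε :=
    dist_update_le (by linarith)
      (lipschitzWith_innerSlide.dist_le_mul_of_le (abs_apply_sub_apply_le hgw i))
  have hmem : |mapCoord i innerSlide (g w) i| < 20 := by
    have h1 := abs_apply_sub_apply_le hslide i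
    have h2 : mapCoord i innerSlide w i = y i + 1 := by
      rw [hw, mapCoord_innerSlide_mapCoord_outerSlide, Pi.add_apply, Pi.single_eq_same]
    rw [h2] at h1
    linarith [abs_sub_abs_le_abs_sub (mapCoord i innerSlide (g w) i) (y i + 1)]
  linarith [h.dist_left_le _ (mem_slab_singleton.2 hmem),
    dist_triangle (f (mapCoord i innerSlide (g w))) (mapCoord i innerSlide (g w))
      (mapCoord i innerSlide w)]

theorem twistedShift_eqOn {D : Set (Fin n → ℝ)} (hD : IsCylinder {i} D)
    (hf : EqOn f id (D ∩ slab {i} 20)) :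
    EqOn (h.twistedShift hε) (· + Pi.single i 1) D := by
  intro y hy
  have hi := Finset.mem_singleton_self i
  rcases le_or_gt 10 |mapCoord i outerSlide y i| with hyi | hyi
  · exact twistedShift_of_mapCoord_le h hε hyi
  have hw : mapCoord i outerSlide y ∈ D := hD.update_mem hi hy _
  have hfw : f (mapCoord i outerSlide y) = mapCoord i outerSlide y :=
    hf ⟨hw, mem_slab_singleton.2 (by linarith)⟩
  have hgw := right_left_of_abs_lt h hε (x := mapCoord i outerSlide y) (by linarith)
  rw [hfw] at hgw
  change h.innerTwist hε (mapCoord i outerSlide y) = _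
  rw [innerTwist_of_abs_lt h hε hyi, hgw, mapCoord_innerSlide_mapCoord_outerSlide]
  refine hf ⟨hD.add_single_mem hi hy 1, mem_slab_singleton.2 ?_⟩
  simpa using (abs_apply_add_one_lt_of_mapCoord hyi).trans (by norm_num)

end NearInverseOn

section IteratedShift

variable {n : ℕ} {i : Fin n} {ε : ℝ} {w z : Fin n → ℝ}

theorem dist_pow_apply_add_single_le {Q : (Fin n → ℝ) ≃ₜ (Fin n → ℝ)} {s : ℝ} (hs : |s| = 1)
    (hfar : ∀ y, 12 ≤ |y i| → Q y = y + Pi.single i s)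
    (hnear : ∀ y, dist (Q y) (y + Pi.single i s) ≤ 4 * ε) (hε : ε ≤ 1 / 1000) (hz : |z i| ≤ 2)
    (hwz : dist w z ≤ ε) (m : ℕ) :
    dist ((Q ^ m) w) (z + Pi.single i (m * s)) ≤ ε + 4 * ε * (min m 15 : ℕ) := by
  induction m with
  | zero => simpa using hwz
  | succ m ih =>
    have hadd : z + Pi.single i ((m + 1 : ℕ) * s) =
        z + Pi.single i (m * s) + Pi.single i s := by
      rw [add_assoc, ← Pi.single_add]
      push_cast
      ring_nf
    rw [pow_succ', Homeomorph.mul_apply, hadd]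
    have hshift := dist_add_right ((Q ^ m) w) (z + Pi.single i (m * s)) (Pi.single i s)
    rcases lt_or_ge m 15 with hm | hm
    · rw [min_eq_left hm.le] at ih
      rw [min_eq_left (by lia)]
      push_cast
      linarith [hnear ((Q ^ m) w), dist_triangle (Q ((Q ^ m) w)) ((Q ^ m) w + Pi.single i s)
        (z + Pi.single i (m * s) + Pi.single i s)]
    · rw [min_eq_right hm] at ih
      rw [min_eq_right (by lia), hfar, hshift]
      · exact ih
      have hi := abs_apply_sub_apply_le ih i
      rw [Pi.add_apply, Pi.single_eq_same] at hi
      have hms : (15 : ℝ) ≤ |m * s| := by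
        rw [abs_mul, hs, mul_one, Nat.abs_cast]
        exact_mod_cast hm
      have h1 := abs_sub_abs_le_abs_sub (z i + m * s) ((Q ^ m) w i)
      have h2 := abs_sub_abs_le_abs_add (m * s) (z i)
      rw [abs_sub_comm] at h1
      rw [add_comm] at h2
      push_cast at hi
      linarith

theorem dist_zpow_apply_add_single_le {P : (Fin n → ℝ) ≃ₜ (Fin n → ℝ)}
    (hfar : ∀ y, 11 ≤ |y i| → P y = y + Pi.single i 1)
    (hnear : ∀ y, dist (P y) (y + Pi.single i 1) ≤ 4 * ε) (hε : ε ≤ 1 / 1000) (hz : |z i| ≤ 2)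
    (hwz : dist w z ≤ ε) (k : ℤ) : dist ((P ^ k) w) (z + Pi.single i ↑k) ≤ 61 * ε := by
  have hbound (m : ℕ) : ε + 4 * ε * (min m 15 : ℕ) ≤ 61 * ε := by
    have hm : ((min m 15 : ℕ) : ℝ) ≤ 15 := by exact_mod_cast min_le_right _ _
    nlinarith [dist_nonneg.trans hwz]
  obtain ⟨m, rfl | rfl⟩ := k.eq_nat_or_neg
  · simpa using (dist_pow_apply_add_single_le abs_one (fun y hy => hfar y (by linarith)) hnear hε hz
      hwz m).trans (hbound m)
  have hfar_inv (y : Fin n → ℝ) (hy : 12 ≤ |y i|) : P⁻¹ y = y + Pi.single i (-1) := by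
    rw [Homeomorph.inv_apply, P.symm_apply_eq, hfar, add_assoc, ← Pi.single_add]
    · simp
    have := abs_sub_abs_le_abs_sub (y i) 1
    rw [abs_one] at this
    simpa [← sub_eq_add_neg] using by linarith
  have hnear_inv (y : Fin n → ℝ) : dist (P⁻¹ y) (y + Pi.single i (-1)) ≤ 4 * ε := by
    rw [Homeomorph.inv_apply, Pi.single_neg, ← dist_add_right _ _ (Pi.single i 1),
      neg_add_cancel_right, dist_comm]
    simpa using hnear (P.symm y)
  have := (dist_pow_apply_add_single_le (by simp) hfar_inv hnear_inv hε hz hwz m).trans (hbound m)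
  simpa using this

theorem zpow_eqOn_add_single {P : (Fin n → ℝ) ≃ₜ (Fin n → ℝ)} {D : Set (Fin n → ℝ)}
    (hD : IsCylinder {i} D) (hP : EqOn P (· + Pi.single i 1) D) (k : ℤ) :
    EqOn (P ^ k) (· + Pi.single i (k : ℝ)) D := by
  have hpow (m : ℕ) : EqOn (P ^ m) (· + Pi.single i (m : ℝ)) D := by
    induction m with
    | zero => intro x _; simp
    | succ m ih =>
      intro x hx
      have hmem := hD.add_single_mem (Finset.mem_singleton_self i) hx m
      rw [pow_succ', Homeomorph.mul_apply, ih hx, hP hmem]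
      simp [Pi.single_add, add_assoc]
  obtain ⟨m, rfl | rfl⟩ := k.eq_nat_or_neg
  · simpa using hpow m
  · intro x hx
    have := hpow m (hD.add_single_mem (Finset.mem_singleton_self i) hx (-m))
    rw [zpow_neg, zpow_natCast, Homeomorph.inv_apply, Homeomorph.symm_apply_eq]
    simpa [Pi.single_neg] using this.symm

end IteratedShift

/-- The homeomorphism `F` straightens `f : slab S a → ℝⁿ`: it extends `f` from the thinner slab
`slab S δ`, it stays `η`-close to the identity, and it fixes those cylinders parallel to `ℝ^S`
which `f` fixes. -/
structure IsStraightening {n : ℕ} (S : Finset (Fin n)) (a δ η : ℝ) (f : (Fin n → ℝ) → Fin n → ℝ)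
    (F : (Fin n → ℝ) ≃ₜ (Fin n → ℝ)) : Prop where
  dist_le : ∀ x, dist (F x) x ≤ η
  eqOn : EqOn F f (slab S δ)
  eqOn_id : ∀ D, IsCylinder S D → EqOn f id (D ∩ slab S a) → EqOn F id D

namespace NearInverseOn

variable {n : ℕ} {i : Fin n} {ε : ℝ} {f g : (Fin n → ℝ) → Fin n → ℝ} {x : Fin n → ℝ}
  (h : NearInverseOn ε f g (slab {i} 20)) (hε : ε ≤ 1 / 1000)

include h hε

/-- The part of space to the right of the hypersurface `f {x | x i = 1}`. The bound `12` cuts off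
the region where `g` is not controlled. -/
def rightOf (i : Fin n) (g : (Fin n → ℝ) → Fin n → ℝ) : Set (Fin n → ℝ) :=
  {y | 12 ≤ y i ∨ |y i| < 12 ∧ 1 ≤ g y i}

theorem left_mem_rightOf_iff (hx : |x i| < 10) : f x ∈ rightOf i g ↔ 1 ≤ x i := by
  have hfx := abs_left_apply_lt h hε hx (by norm_num)
  have := le_abs_self (f x i)
  rw [rightOf, mem_ofPred_eq, right_left_of_abs_lt h hε (by linarith)]
  exact ⟨fun h' => h'.elim (fun _ => by linarith) And.right, fun h' => Or.inr ⟨by linarith, h'⟩⟩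

theorem mapCoord_outerSlide_mem_rightOf {y : Fin n → ℝ} (hy : y ∈ rightOf i g) :
    mapCoord i outerSlide y ∈ rightOf i g := by
  have hle : y i ≤ mapCoord i outerSlide y i := by
    rw [mapCoord_apply_self]
    exact le_outerSlide _
  rcases hy with hy | ⟨hy, hgy⟩
  · exact Or.inl (hy.trans hle)
  rcases le_or_gt |y i| 2 with hy2 | hy2
  · rw [mapCoord_eq_self (outerSlide_of_abs_le hy2)]
    exact Or.inr ⟨hy, hgy⟩
  have hgyi := abs_le.1 (abs_left_apply_sub_le h.symm hε (x := y) (by linarith))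
  have hpos : 2 < y i := (lt_abs.1 hy2).resolve_right (by linarith)
  refine or_iff_not_imp_left.2 fun hw => ?_
  have hw12 : |mapCoord i outerSlide y i| < 12 := abs_lt.2 ⟨by linarith, not_le.1 hw⟩
  have hgw := abs_le.1 (abs_left_apply_sub_le h.symm hε (hw12.trans (by norm_num)))
  exact ⟨hw12, by linarith⟩

theorem innerTwist_mem_rightOf {y : Fin n → ℝ} (hy : y ∈ rightOf i g) :
    h.innerTwist hε y ∈ rightOf i g := by
  rcases le_or_gt 10 |y i| with hy10 | hy10
  · rwa [innerTwist_of_le_abs h hε hy10]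
  have hgy := abs_left_apply_lt h.symm hε hy10 (by norm_num)
  have h1 : 1 ≤ g y i := hy.elim (fun _ => by linarith [le_abs_self (y i)]) And.right
  rw [innerTwist_of_abs_lt h hε hy10]
  set v := mapCoord i innerSlide (g y)
  have hvi : v i = innerSlide (g y i) := mapCoord_apply_self _
  have h1v : 1 ≤ v i := hvi ▸ h1.trans (le_innerSlide _)
  have hv11 : |v i| ≤ 11 := by
    by_contra hcon
    have hfix := innerSlide.injective (hvi ▸ innerSlide_of_le_abs (t := v i) (by linarith))
    rw [hvi, hfix] at hcon
    linarith
  have hfv := abs_left_apply_lt h hε (x := v) (r := 11.9) (by linarith) (by norm_num)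
  exact Or.inr ⟨by linarith, by rwa [right_left_of_abs_lt h hε (by linarith)]⟩

theorem twistedShift_pow_mem_rightOf (hx0 : 0 ≤ x i) (hx1 : x i < 1) (m : ℕ) :
    (h.twistedShift hε ^ (m + 1)) (f x) ∈ rightOf i g := by
  induction m with
  | zero =>
    rw [zero_add, pow_one, twistedShift_left h hε (abs_le.2 ⟨by linarith, by linarith⟩),
      left_mem_rightOf_iff h hε] <;> simp only [Pi.add_apply, Pi.single_eq_same]
    · linarith
    · exact abs_lt.2 ⟨by linarith, by linarith⟩
  | succ m ih =>
    rw [pow_succ']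
    exact innerTwist_mem_rightOf h hε (mapCoord_outerSlide_mem_rightOf h hε ih)

/-- One branch of `NearInverseOn.unroll`: the map `f` near `{x | x i = 0}`, carried to
`{x | x i = k}`. -/
noncomputable def unrollBranch (k : ℤ) (x : Fin n → ℝ) : Fin n → ℝ :=
  (h.twistedShift hε ^ k) (f (x - Pi.single i ↑k))

/-- The extension of `f` from a neighbourhood of `{x | x i = 0}` to all of space which conjugates
the translation of the `i`-th coordinate to `NearInverseOn.twistedShift`. -/
noncomputable def unroll (x : Fin n → ℝ) : Fin n → ℝ := h.unrollBranch hε ⌊x i⌋ x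

/-- The set on which `unroll` agrees with `unrollBranch k`. -/
def branchDomain (i : Fin n) (k : ℤ) : Set (Fin n → ℝ) :=
  {x | x i ∈ Ioo (k - 1 / 2 : ℝ) (k + 3 / 2)}

omit h hε

theorem isOpen_branchDomain (i : Fin n) (k : ℤ) : IsOpen (branchDomain i k) :=
  isOpen_Ioo.preimage (continuous_apply i)

theorem mem_branchDomain_floor (i : Fin n) (x : Fin n → ℝ) : x ∈ branchDomain i ⌊x i⌋ :=
  ⟨by linarith [Int.floor_le (x i)], by linarith [Int.lt_floor_add_one (x i)]⟩

theorem abs_sub_single_apply_lt {k : ℤ} (hx : x ∈ branchDomain i k) :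
    |(x - Pi.single i (k : ℝ) : Fin n → ℝ) i| < 2 := by
  rw [Pi.sub_apply, Pi.single_eq_same]
  exact abs_lt.2 ⟨by linarith [hx.1], by linarith [hx.2]⟩

theorem sub_single_floor_mem_Ico (i : Fin n) (x : Fin n → ℝ) :
    (x - Pi.single i (⌊x i⌋ : ℝ) : Fin n → ℝ) i ∈ Ico (0 : ℝ) 1 := by
  rw [Pi.sub_apply, Pi.single_eq_same]
  exact ⟨Int.fract_nonneg _, Int.fract_lt_one _⟩

include h hε

theorem unrollBranch_add_one {k : ℤ} (hx : |x i - (k + 1)| ≤ 3 / 2) :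
    h.unrollBranch hε (k + 1) x = h.unrollBranch hε k x := by
  rw [unrollBranch, zpow_add_one, Homeomorph.mul_apply, twistedShift_left h hε (by simpa using hx),
    unrollBranch, sub_add]
  simp [← Pi.single_sub]

theorem unroll_eqOn_unrollBranch (k : ℤ) :
    EqOn (h.unroll hε) (h.unrollBranch hε k) (branchDomain i k) := by
  rintro x ⟨hkx, hxk⟩
  have hle : k - 1 ≤ ⌊x i⌋ := Int.le_floor.2 (by push_cast; linarith)
  have hlt : ⌊x i⌋ < k + 2 := Int.floor_lt.2 (by push_cast; linarith)
  obtain hk | hk | hk : ⌊x i⌋ = k - 1 ∨ ⌊x i⌋ = k ∨ ⌊x i⌋ = k + 1 := by lia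
  · obtain rfl : k = ⌊x i⌋ + 1 := by lia
    push_cast at hkx
    refine (unrollBranch_add_one h hε (abs_le.2 ?_)).symm
    constructor <;> linarith [Int.lt_floor_add_one (x i)]
  · rw [unroll, hk]
  · rw [unroll, hk]
    refine unrollBranch_add_one h hε (abs_le.2 ?_)
    have := Int.floor_le (x i)
    rw [hk] at this
    push_cast at this
    constructor <;> linarith

theorem continuousOn_unrollBranch (k : ℤ) :
    ContinuousOn (h.unrollBranch hε k) (branchDomain i k) :=
  (h.twistedShift hε ^ k).continuous.comp_continuousOn <| h.continuousOn_left.comp (by fun_prop)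
    fun _ hx => mem_slab_singleton.2 ((abs_sub_single_apply_lt hx).trans (by norm_num))

theorem continuous_unroll : Continuous (h.unroll hε) :=
  continuous_iff_continuousAt.2 fun x =>
    have hmem := (isOpen_branchDomain i _).mem_nhds (mem_branchDomain_floor i x)
    ((continuousOn_unrollBranch h hε _).continuousAt hmem).congr
      ((unroll_eqOn_unrollBranch h hε _).eventuallyEq_of_mem hmem).symm

theorem isOpen_image_unrollBranch {k : ℤ} {U : Set (Fin n → ℝ)} (hU : IsOpen U)
    (hUk : U ⊆ branchDomain i k) : IsOpen (h.unrollBranch hε k '' U) := by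
  have himage : h.unrollBranch hε k '' U =
      (h.twistedShift hε ^ k) '' (f '' (Homeomorph.subRight (Pi.single i (k : ℝ)) '' U)) := by
    simp_rw [image_image]
    rfl
  rw [himage]
  refine (h.twistedShift hε ^ k).isOpenMap _ (h.isOpen_image (isOpen_slab _ _)
    ((Homeomorph.subRight _).isOpenMap _ hU) ?_ ?_)
  all_goals
    rintro _ ⟨x, hx, rfl⟩
    have := abs_sub_single_apply_lt (hUk hx)
    rw [mem_slab_singleton]
  · exact this.trans (by norm_num)
  · exact (abs_left_apply_lt h hε this (by norm_num)).trans (by norm_num)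

theorem isOpenMap_unroll : IsOpenMap (h.unroll hε) := by
  intro U hU
  have himage : h.unroll hε '' U = ⋃ k : ℤ, h.unrollBranch hε k '' (U ∩ branchDomain i k) := by
    rw [← iUnion_congr fun k =>
        ((unroll_eqOn_unrollBranch h hε k).mono inter_subset_right).image_eq,
      ← image_iUnion, ← inter_iUnion, iUnion_eq_univ_iff.2 fun x => ⟨_, mem_branchDomain_floor i x⟩,
      inter_univ]
  rw [himage]
  exact isOpen_iUnion fun k =>
    isOpen_image_unrollBranch h hε (hU.inter (isOpen_branchDomain i k)) inter_subset_right

theorem dist_unroll_le (x : Fin n → ℝ) : dist (h.unroll hε x) x ≤ 61 * ε := by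
  have hx := abs_sub_single_apply_lt (mem_branchDomain_floor i x)
  have := dist_zpow_apply_add_single_le (fun _ => twistedShift_of_le_abs h hε)
    (dist_twistedShift_le h hε) hε hx.le
    (h.dist_left_le _ (mem_slab_singleton.2 (hx.trans (by norm_num)))) ⌊x i⌋
  rwa [sub_add_cancel] at this

theorem eq_of_left_eq_twistedShift_pow_left {z z' : Fin n → ℝ} (hz : z i ∈ Ico (0 : ℝ) 1)
    (hz' : z' i ∈ Ico (0 : ℝ) 1) {m : ℕ} (heq : f z = (h.twistedShift hε ^ m) (f z')) :
    m = 0 ∧ z = z' := by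
  have habs {y : Fin n → ℝ} (hy : y i ∈ Ico (0 : ℝ) 1) : |y i| < 10 :=
    abs_lt.2 ⟨by linarith [hy.1], by linarith [hy.2]⟩
  cases m with
  | zero =>
    have := congrArg g heq
    rw [pow_zero, Homeomorph.one_apply, right_left_of_abs_lt h hε ((habs hz).trans (by norm_num)),
      right_left_of_abs_lt h hε ((habs hz').trans (by norm_num))] at this
    exact ⟨rfl, this⟩
  | succ m =>
    have hmem := twistedShift_pow_mem_rightOf h hε hz'.1 hz'.2 m
    rw [← heq, left_mem_rightOf_iff h hε (habs hz)] at hmem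
    exact absurd hz.2 hmem.not_gt

theorem injective_unroll : Function.Injective (h.unroll hε) := by
  have main {x x' : Fin n → ℝ} (hle : ⌊x i⌋ ≤ ⌊x' i⌋) (heq : h.unroll hε x = h.unroll hε x') :
      x = x' := by
    obtain ⟨m, hm⟩ := Int.le.dest hle
    have hx' : h.unroll hε x' = (h.twistedShift hε ^ ⌊x i⌋)
        ((h.twistedShift hε ^ m) (f (x' - Pi.single i (⌊x' i⌋ : ℝ)))) := by
      rw [unroll, unrollBranch, ← hm, zpow_add, zpow_natCast, Homeomorph.mul_apply]
    rw [hx'] at heq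
    obtain ⟨rfl, hsub⟩ := eq_of_left_eq_twistedShift_pow_left h hε (sub_single_floor_mem_Ico i x)
      (sub_single_floor_mem_Ico i x') ((h.twistedShift hε ^ ⌊x i⌋).injective heq)
    rwa [← hm, Nat.cast_zero, add_zero, sub_left_inj] at hsub
  intro x x' heq
  exact (le_total ⌊x i⌋ ⌊x' i⌋).elim (main · heq) fun hle => (main hle heq.symm).symm

theorem exists_isStraightening_singleton :
    ∃ F, IsStraightening {i} 20 (1 / 2) (61 * ε) f F := by
  obtain ⟨F, hF⟩ := exists_homeomorph_eq_of_dist_le (continuous_unroll h hε) (injective_unroll h hε)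
    (isOpenMap_unroll h hε) (dist_unroll_le h hε)
  refine ⟨F, hF ▸ dist_unroll_le h hε, hF ▸ fun x hx => ?_, hF ▸ fun D hD hf x hx => ?_⟩
  · rw [mem_slab_singleton, abs_lt] at hx
    rw [unroll_eqOn_unrollBranch h hε 0]
    · simp [unrollBranch]
    · constructor <;> push_cast <;> linarith
  · have hmem : x - Pi.single i (⌊x i⌋ : ℝ) ∈ D := by
      simpa [sub_eq_add_neg, Pi.single_neg] using
        hD.add_single_mem (Finset.mem_singleton_self i) hx (-⌊x i⌋)
    have hslab := (abs_sub_single_apply_lt (mem_branchDomain_floor i x)).trans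
      (show (2 : ℝ) < 20 by norm_num)
    rw [unroll, unrollBranch, hf ⟨hmem, mem_slab_singleton.2 hslab⟩, id,
      zpow_eqOn_add_single hD (twistedShift_eqOn h hε hD hf) _ hmem]
    exact sub_add_cancel x _

end NearInverseOn

section Pair

theorem exists_homeomorph_eqOn_exp_sub_one : ∃ (L : ℂ ≃ₜ ℂ) (δ : ℝ), 0 < δ ∧
    EqOn L (fun z => Complex.exp z - 1) (ball 0 δ) ∧ LipschitzWith 2 L := by
  have hstrict : HasStrictFDerivAt (fun z => Complex.exp z - 1 - z) (0 : ℂ →L[ℝ] ℂ) 0 := by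
    have h : HasStrictDerivAt (fun z => Complex.exp z - 1 - z) (Complex.exp 0 - 1) 0 :=
      ((Complex.hasStrictDerivAt_exp 0).sub_const 1).sub (hasStrictDerivAt_id 0)
    refine (h.hasStrictFDerivAt.restrictScalars ℝ).congr_fderiv ?_
    ext z
    simp
  have hC := lipschitzExtensionConstant_pos ℂ
  obtain ⟨s, hs, hlip⟩ := hstrict.exists_lipschitzOnWith_of_nnnorm_lt
    ((lipschitzExtensionConstant ℂ)⁻¹ * 2⁻¹) (by simpa using hC)
  obtain ⟨δ, hδ, hball⟩ := Metric.mem_nhds_iff.1 hs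
  obtain ⟨p, hp, heq⟩ := hlip.extend_finite_dimension
  rw [mul_inv_cancel_left₀ hC.ne'] at hp
  refine ⟨idAddHomeomorph hp (inv_lt_one_of_one_lt₀ one_lt_two), δ, hδ, fun z hz => ?_, ?_⟩
  · rw [idAddHomeomorph_apply, ← heq (hball hz)]
    ring
  · refine (LipschitzWith.id.add hp).weaken ?_
    rw [← one_add_one_eq_two]
    gcongr
    exact inv_le_one_of_one_le₀ (by norm_num)

variable {n : ℕ} {i₀ i j : Fin n} {x y : Fin n → ℝ} {w v : ℂ} {d : ℝ}

/-- The coordinates `i₀` and `i`, read as a complex number. -/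
noncomputable def pair (i₀ i : Fin n) (x : Fin n → ℝ) : ℂ := x i₀ + x i * Complex.I

/-- Replaces the coordinates `i₀` and `i` by the real and imaginary part of a complex number. -/
def updatePair (i₀ i : Fin n) (x : Fin n → ℝ) (w : ℂ) : Fin n → ℝ :=
  Function.update (Function.update x i₀ w.re) i w.im

@[simp]
theorem re_pair (i₀ i : Fin n) (x : Fin n → ℝ) : (pair i₀ i x).re = x i₀ := by simp [pair]

@[simp]
theorem im_pair (i₀ i : Fin n) (x : Fin n → ℝ) : (pair i₀ i x).im = x i := by simp [pair]

theorem continuous_pair (i₀ i : Fin n) : Continuous (pair i₀ i) := by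
  unfold pair
  fun_prop

theorem norm_pair_sub_pair_le (h : dist x y ≤ d) : ‖pair i₀ i x - pair i₀ i y‖ ≤ 2 * d := by
  have hnorm := Complex.norm_le_abs_re_add_abs_im (pair i₀ i x - pair i₀ i y)
  simp only [Complex.sub_re, Complex.sub_im, re_pair, im_pair] at hnorm
  linarith [abs_apply_sub_apply_le h i₀, abs_apply_sub_apply_le h i]

@[simp]
theorem updatePair_pair (i₀ i : Fin n) (x : Fin n → ℝ) : updatePair i₀ i x (pair i₀ i x) = x := by
  simp [updatePair]

theorem updatePair_of_ne (x : Fin n → ℝ) (w : ℂ) (h₀ : j ≠ i₀) (h : j ≠ i) :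
    updatePair i₀ i x w j = x j := by
  simp [updatePair, h₀, h]

theorem continuous_updatePair (i₀ i : Fin n) :
    Continuous fun p : (Fin n → ℝ) × ℂ => updatePair i₀ i p.1 p.2 :=
  (continuous_fst.update i₀ (Complex.continuous_re.comp continuous_snd)).update i
    (Complex.continuous_im.comp continuous_snd)

theorem dist_updatePair_le (h : dist x y ≤ d) (hw : ‖w - v‖ ≤ d) :
    dist (updatePair i₀ i x w) (updatePair i₀ i y v) ≤ d := by
  refine dist_update_le (dist_update_le h ?_) ?_
  · rw [← Complex.sub_re]
    exact (Complex.abs_re_le_norm _).trans hw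
  · rw [← Complex.sub_im]
    exact (Complex.abs_im_le_norm _).trans hw

theorem IsCylinder.updatePair_mem {S : Finset (Fin n)} {D : Set (Fin n → ℝ)}
    (hD : IsCylinder (insert i S) D) (h₀ : i₀ ∈ S) (hx : x ∈ D) (w : ℂ) :
    updatePair i₀ i x w ∈ D :=
  hD.update_mem (Finset.mem_insert_self i S)
    (hD.update_mem (Finset.mem_insert_of_mem h₀) hx _) _

variable (hi : i ≠ i₀)

include hi

theorem pair_updatePair (x : Fin n → ℝ) (w : ℂ) : pair i₀ i (updatePair i₀ i x w) = w := by
  apply Complex.ext <;> simp [updatePair, hi.symm]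

theorem updatePair_updatePair (x : Fin n → ℝ) (w v : ℂ) :
    updatePair i₀ i (updatePair i₀ i x w) v = updatePair i₀ i x v := by
  rw [updatePair, updatePair, updatePair, Function.update_comm hi.symm, Function.update_idem,
    Function.update_comm hi, Function.update_idem]

/-- The homeomorphism applying `L` to the pair of the `i₀`-th and the `i`-th coordinate. -/
noncomputable def mapPair (L : ℂ ≃ₜ ℂ) : (Fin n → ℝ) ≃ₜ (Fin n → ℝ) where
  toFun x := updatePair i₀ i x (L (pair i₀ i x))
  invFun x := updatePair i₀ i x (L.symm (pair i₀ i x))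
  left_inv x := by simp [pair_updatePair hi, updatePair_updatePair hi]
  right_inv x := by simp [pair_updatePair hi, updatePair_updatePair hi]
  continuous_toFun := (continuous_updatePair i₀ i).comp
    (continuous_id.prodMk (L.continuous.comp (continuous_pair i₀ i)))
  continuous_invFun := (continuous_updatePair i₀ i).comp
    (continuous_id.prodMk (L.symm.continuous.comp (continuous_pair i₀ i)))

theorem mapPair_apply (L : ℂ ≃ₜ ℂ) (x : Fin n → ℝ) :
    mapPair hi L x = updatePair i₀ i x (L (pair i₀ i x)) := rfl

theorem mapPair_symm_apply (L : ℂ ≃ₜ ℂ) (x : Fin n → ℝ) :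
    (mapPair hi L).symm x = updatePair i₀ i x (L.symm (pair i₀ i x)) := rfl

theorem mapPair_symm_mem_slab {S : Finset (Fin n)} {L : ℂ ≃ₜ ℂ} {r : ℝ} (hx : x ∈ slab S r)
    (hL : ‖L.symm (pair i₀ i x)‖ < r) : (mapPair hi L).symm x ∈ slab S r := by
  intro j hj
  set y := (mapPair hi L).symm x with hy
  rw [← pair_updatePair hi x (L.symm (pair i₀ i x)), ← mapPair_symm_apply hi, ← hy] at hL
  rcases eq_or_ne j i₀ with rfl | hj₀
  · rw [← re_pair j i y]
    exact (Complex.abs_re_le_norm _).trans_lt hL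
  rcases eq_or_ne j i with rfl | hji
  · rw [← im_pair i₀ j y]
    exact (Complex.abs_im_le_norm _).trans_lt hL
  rw [hy, mapPair_symm_apply, updatePair_of_ne _ _ hj₀ hji]
  exact hx j hj

theorem lipschitzWith_mapPair {L : ℂ ≃ₜ ℂ} (hL : LipschitzWith 2 L) :
    LipschitzWith 4 (mapPair hi L) := by
  refine LipschitzWith.of_dist_le_mul fun x y => dist_updatePair_le ?_ ?_
  · exact le_mul_of_one_le_left dist_nonneg (by norm_num)
  · have hpair := norm_pair_sub_pair_le (i₀ := i₀) (i := i) (le_refl (dist x y))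
    have hLip := hL.norm_sub_le (pair i₀ i x) (pair i₀ i y)
    push_cast at hLip ⊢
    linarith

end Pair

section ExpLift

variable {n : ℕ} {i₀ i : Fin n} {S : Finset (Fin n)} {a ε : ℝ} {f g : (Fin n → ℝ) → Fin n → ℝ}
  {x : Fin n → ℝ}

/-- The immersion `z ↦ exp z - 1` in two coordinates. It winds a slab around the axis where both
coordinates vanish, with one unbounded direction becoming bounded. -/
noncomputable def expPair (i₀ i : Fin n) (x : Fin n → ℝ) : Fin n → ℝ :=
  updatePair i₀ i x (Complex.exp (pair i₀ i x) - 1)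

/-- The lift of `f` through `expPair`. -/
noncomputable def expLift (i₀ i : Fin n) (f : (Fin n → ℝ) → Fin n → ℝ) (x : Fin n → ℝ) :
    Fin n → ℝ :=
  updatePair i₀ i (f (expPair i₀ i x)) (pair i₀ i x +
    Complex.log ((pair i₀ i (f (expPair i₀ i x)) + 1) / Complex.exp (pair i₀ i x)))

theorem continuous_expPair (i₀ i : Fin n) : Continuous (expPair i₀ i) :=
  (continuous_updatePair i₀ i).comp (continuous_id.prodMk
    ((Complex.continuous_exp.comp (continuous_pair i₀ i)).sub continuous_const))

variable (hi : i ≠ i₀) (h₀ : i₀ ∈ S)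

include hi

theorem mapPair_eq_expPair {L : ℂ ≃ₜ ℂ} {δ : ℝ}
    (hL : EqOn L (fun z => Complex.exp z - 1) (ball 0 δ)) (hx : ‖pair i₀ i x‖ < δ) :
    mapPair hi L x = expPair i₀ i x := by
  rw [mapPair_apply, hL (mem_ball_zero_iff.2 hx), expPair]

theorem pair_expPair (x : Fin n → ℝ) :
    pair i₀ i (expPair i₀ i x) = Complex.exp (pair i₀ i x) - 1 :=
  pair_updatePair hi _ _

theorem updatePair_expPair (x : Fin n → ℝ) :
    updatePair i₀ i (expPair i₀ i x) (pair i₀ i x) = x := by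
  rw [expPair, updatePair_updatePair hi, updatePair_pair]

theorem expLift_eq_self (hf : f (expPair i₀ i x) = expPair i₀ i x) : expLift i₀ i f x = x := by
  rw [expLift, hf, pair_expPair hi, sub_add_cancel, div_self (Complex.exp_ne_zero _),
    Complex.log_one, add_zero, updatePair_expPair hi]

include h₀

theorem expPair_mem_slab (hx : x ∈ slab S a) :
    expPair i₀ i x ∈ slab (insert i S) (Real.exp a + 2) := by
  have hexp : ‖Complex.exp (pair i₀ i x)‖ < Real.exp a := by
    rw [Complex.norm_exp, Real.exp_lt_exp, re_pair]
    exact (le_abs_self _).trans_lt (hx i₀ h₀)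
  have hnorm : ‖pair i₀ i (expPair i₀ i x)‖ < Real.exp a + 2 := by
    rw [pair_expPair hi]
    linarith [norm_sub_le (Complex.exp (pair i₀ i x)) 1, norm_one (α := ℂ)]
  intro j hj
  rcases eq_or_ne j i with rfl | hji
  · rw [← im_pair i₀ j (expPair i₀ j x)]
    exact (Complex.abs_im_le_norm _).trans_lt hnorm
  rcases eq_or_ne j i₀ with rfl | hj₀
  · rw [← re_pair j i (expPair j i x)]
    exact (Complex.abs_re_le_norm _).trans_lt hnorm
  rw [expPair, updatePair_of_ne _ _ hj₀ hji]
  linarith [hx j (Finset.mem_of_mem_insert_of_ne hj hji), Real.add_one_le_exp a]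

namespace NearInverseOn

variable (h : NearInverseOn ε f g (slab (insert i S) (Real.exp a + 2)))
  (hε : 2 * ε * Real.exp a ≤ 1 / 10)

include h

theorem norm_pair_add_one_div_exp_sub_one_le (hx : x ∈ slab S a) :
    ‖(pair i₀ i (f (expPair i₀ i x)) + 1) / Complex.exp (pair i₀ i x) - 1‖ ≤
      2 * ε * Real.exp a := by
  have hdist := h.dist_left_le _ (expPair_mem_slab hi h₀ hx)
  have hquot : (pair i₀ i (f (expPair i₀ i x)) + 1) / Complex.exp (pair i₀ i x) - 1 =
      (pair i₀ i (f (expPair i₀ i x)) - pair i₀ i (expPair i₀ i x)) *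
        Complex.exp (-pair i₀ i x) := by
    rw [pair_expPair hi, Complex.exp_neg]
    field_simp
    ring
  rw [hquot, norm_mul]
  refine mul_le_mul (norm_pair_sub_pair_le hdist) ?_ (norm_nonneg _)
    (by linarith [dist_nonneg.trans hdist])
  rw [Complex.norm_exp, Real.exp_le_exp, Complex.neg_re, re_pair]
  exact (neg_le_abs _).trans (hx i₀ h₀).le

include hε

theorem pair_add_one_div_exp_mem_slitPlane (hx : x ∈ slab S a) :
    (pair i₀ i (f (expPair i₀ i x)) + 1) / Complex.exp (pair i₀ i x) ∈ Complex.slitPlane := by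
  have hquot := norm_pair_add_one_div_exp_sub_one_le hi h₀ h hx
  have := Complex.mem_slitPlane_of_norm_lt_one ((hquot.trans hε).trans_lt (by norm_num))
  rwa [add_sub_cancel] at this

theorem expPair_expLift (hx : x ∈ slab S a) :
    expPair i₀ i (expLift i₀ i f x) = f (expPair i₀ i x) := by
  have hne := Complex.slitPlane_ne_zero (pair_add_one_div_exp_mem_slitPlane hi h₀ h hε hx)
  rw [expPair, expLift, updatePair_updatePair hi, pair_updatePair hi, Complex.exp_add,
    Complex.exp_log hne, mul_div_cancel₀ _ (Complex.exp_ne_zero _), add_sub_cancel_right,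
    updatePair_pair]

theorem dist_expLift_le (ha : 0 ≤ a) (hx : x ∈ slab S a) :
    dist (expLift i₀ i f x) x ≤ 3 * ε * Real.exp a := by
  have hquot := norm_pair_add_one_div_exp_sub_one_le hi h₀ h hx
  have hdist := h.dist_left_le _ (expPair_mem_slab hi h₀ hx)
  have hlog := Complex.norm_log_one_add_half_le_self ((hquot.trans hε).trans (by norm_num))
  rw [add_sub_cancel] at hlog
  nth_rw 2 [← updatePair_expPair hi x]
  refine dist_updatePair_le (hdist.trans ?_) ?_
  · nlinarith [dist_nonneg.trans hdist, Real.one_le_exp ha]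
  · rw [add_sub_cancel_left]
    linarith

theorem continuousOn_expLift : ContinuousOn (expLift i₀ i f) (slab S a) := by
  have hf : ContinuousOn (fun x => f (expPair i₀ i x)) (slab S a) :=
    h.continuousOn_left.comp (continuous_expPair i₀ i).continuousOn
      fun _ hx => expPair_mem_slab hi h₀ hx
  have hpair := continuous_pair i₀ i
  refine (continuous_updatePair i₀ i).comp_continuousOn
    (hf.prodMk (hpair.continuousOn.add (ContinuousOn.clog ?_ ?_)))
  · exact ((hpair.comp_continuousOn hf).add continuousOn_const).div
      (Complex.continuous_exp.comp hpair).continuousOn fun _ _ => Complex.exp_ne_zero _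
  · exact fun x hx => pair_add_one_div_exp_mem_slitPlane hi h₀ h hε hx

omit h hε h₀

theorem eq_of_expPair_eq {y : Fin n → ℝ} (hxy : expPair i₀ i y = expPair i₀ i x)
    (hdist : dist y x < 2 * Real.pi) : y = x := by
  have hexp := congrArg (pair i₀ i) hxy
  rw [pair_expPair hi, pair_expPair hi, sub_left_inj,
    Complex.exp_eq_exp_iff_exists_int] at hexp
  obtain ⟨k, hk⟩ := hexp
  have him : |y i - x i| < 2 * Real.pi := (abs_apply_sub_apply_le le_rfl i).trans_lt hdist
  have hk_im : y i = x i + k * (2 * Real.pi) := by simpa using congrArg Complex.im hk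
  obtain rfl : k = 0 := by
    rw [hk_im, add_sub_cancel_left, abs_mul, abs_of_pos Real.two_pi_pos] at him
    rw [mul_lt_iff_lt_one_left Real.two_pi_pos] at him
    exact Int.abs_lt_one_iff.1 (by exact_mod_cast him)
  rw [← updatePair_expPair hi y, ← updatePair_expPair hi x, hxy, hk, Int.cast_zero, zero_mul,
    add_zero]

include h₀ h hε

theorem expLift_expLift (ha : 0 ≤ a) (hx : x ∈ slab S a) (hfx : expLift i₀ i f x ∈ slab S a) :
    expLift i₀ i g (expLift i₀ i f x) = x := by
  refine eq_of_expPair_eq hi ?_ ?_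
  · have hE := expPair_mem_slab hi h₀ hfx
    rw [expPair_expLift hi h₀ h hε hx] at hE
    rw [expPair_expLift hi h₀ h.symm hε hfx, expPair_expLift hi h₀ h hε hx,
      h.right_left _ (expPair_mem_slab hi h₀ hx) hE]
  · linarith [dist_triangle (expLift i₀ i g (expLift i₀ i f x)) (expLift i₀ i f x) x,
      dist_expLift_le hi h₀ h.symm hε ha hfx, dist_expLift_le hi h₀ h hε ha hx, Real.pi_gt_three]

theorem expLift (ha : 0 ≤ a) :
    NearInverseOn (3 * ε * Real.exp a) (expLift i₀ i f) (expLift i₀ i g) (slab S a) :=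
  ⟨continuousOn_expLift hi h₀ h hε, continuousOn_expLift hi h₀ h.symm hε,
    fun _ => dist_expLift_le hi h₀ h hε ha, fun _ => dist_expLift_le hi h₀ h.symm hε ha,
    fun _ => expLift_expLift hi h₀ h hε ha, fun _ => expLift_expLift hi h₀ h.symm hε ha⟩

end NearInverseOn

end ExpLift

section Straightening

variable {n : ℕ} {i₀ i : Fin n} {S : Finset (Fin n)} {a δ ε η : ℝ}
  {f g : (Fin n → ℝ) → Fin n → ℝ} {F : (Fin n → ℝ) ≃ₜ (Fin n → ℝ)}

theorem IsCylinder.mono {S' : Finset (Fin n)} {D : Set (Fin n → ℝ)} (hD : IsCylinder S D)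
    (hS : S' ⊆ S) : IsCylinder S' D :=
  fun x hx y hy => hD x hx y fun j hj => hy j fun hj' => hj (hS hj')

theorem IsStraightening.conj_mapPair (hi : i ≠ i₀) (h₀ : i₀ ∈ S)
    (h : NearInverseOn ε f g (slab (insert i S) (Real.exp a + 2)))
    (hε : 2 * ε * Real.exp a ≤ 1 / 10) (hF : IsStraightening S a δ η (expLift i₀ i f) F)
    {L : ℂ ≃ₜ ℂ} {δ₀ δ₁ r : ℝ} (hL : EqOn L (fun z => Complex.exp z - 1) (ball 0 δ₀))
    (hLip : LipschitzWith 2 L) (hsymm : ∀ z, ‖z‖ < 2 * δ₁ → ‖L.symm z‖ < r) (hδ₁ : δ₁ ≤ r)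
    (hrδ : r ≤ δ) (hra : r ≤ a) (hrη : r + 2 * η ≤ δ₀) :
    IsStraightening (insert i S) (Real.exp a + 2) δ₁ (4 * η) f
      (((mapPair hi L).symm.trans F).trans (mapPair hi L)) where
  dist_le x := by
    have := (lipschitzWith_mapPair hi hLip).dist_le_mul_of_le (hF.dist_le ((mapPair hi L).symm x))
    rwa [Homeomorph.apply_symm_apply] at this
  eqOn x hx := by
    have hsmall : ‖L.symm (pair i₀ i x)‖ < r := by
      refine hsymm _ ?_
      have hnorm := Complex.norm_le_abs_re_add_abs_im (pair i₀ i x)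
      rw [re_pair, im_pair] at hnorm
      linarith [hx i₀ (Finset.mem_insert_of_mem h₀), hx i (Finset.mem_insert_self i S)]
    have hy := mapPair_symm_mem_slab hi (slab_subset_slab (Finset.subset_insert i S) hδ₁ hx) hsmall
    change mapPair hi L (F ((mapPair hi L).symm x)) = f x
    set y := (mapPair hi L).symm x with hyx
    have hpair : pair i₀ i y = L.symm (pair i₀ i x) := pair_updatePair hi _ _
    have hFy := norm_pair_sub_pair_le (i₀ := i₀) (i := i) (hF.dist_le y)
    have hη : 0 ≤ η := dist_nonneg.trans (hF.dist_le y)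
    have hxy : expPair i₀ i y = x := by
      rw [← mapPair_eq_expPair hi hL (by rw [hpair]; linarith), hyx, Homeomorph.apply_symm_apply]
    rw [mapPair_eq_expPair hi hL, hF.eqOn (slab_subset_slab subset_rfl hrδ hy),
      h.expPair_expLift hi h₀ hε (slab_subset_slab subset_rfl hra hy), hxy]
    rw [hpair] at hFy
    linarith [norm_le_norm_add_norm_sub' (pair i₀ i (F y)) (L.symm (pair i₀ i x))]
  eqOn_id D hD hf y hy := by
    refine (mapPair hi L).symm_apply_eq.1 (hF.eqOn_id D (hD.mono (Finset.subset_insert i S)) ?_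
      (hD.updatePair_mem h₀ hy _)).symm |>.symm
    exact fun x hx => expLift_eq_self hi
      (hf ⟨hD.updatePair_mem h₀ hx.1 _, expPair_mem_slab hi h₀ hx.2⟩)

theorem exists_isStraightening_empty (h : NearInverseOn ε f g (slab ∅ a)) :
    ∃ F, IsStraightening ∅ a δ ε f F := by
  have huniv (x : Fin n → ℝ) : x ∈ slab ∅ a := by simp [slab]
  have hcont {k : (Fin n → ℝ) → Fin n → ℝ} (hk : ContinuousOn k (slab ∅ a)) : Continuous k :=
    continuousOn_univ.1 (hk.mono fun x _ => huniv x)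
  exact ⟨⟨⟨f, g, fun x => h.right_left x (huniv x) (huniv _),
    fun x => h.left_right x (huniv x) (huniv _)⟩, hcont h.continuousOn_left,
    hcont h.continuousOn_right⟩, fun x => h.dist_left_le x (huniv x), fun _ _ => rfl,
    fun D _ hf x hx => hf ⟨hx, huniv x⟩⟩

/-- Maps on `slab S a` near the identity can be straightened, keeping their values on `slab S δ`,
with a control depending only on how near they are. -/
def CanStraighten (S : Finset (Fin n)) (a δ : ℝ) : Prop :=
  ∀ η > 0, ∃ ε > 0, ∀ f g, NearInverseOn ε f g (slab S a) → ∃ F, IsStraightening S a δ η f F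

theorem CanStraighten.exists_insert (hi : i ≠ i₀) (h₀ : i₀ ∈ S) (ha : 0 < a) (hδ : 0 < δ)
    (h : CanStraighten S a δ) : ∃ δ₁ > 0, CanStraighten (insert i S) (Real.exp a + 2) δ₁ := by
  obtain ⟨L, δ₀, hδ₀, hL, hLip⟩ := exists_homeomorph_eqOn_exp_sub_one
  have hL0 : L.symm 0 = 0 := by
    simp [L.symm_apply_eq, hL (mem_ball_self hδ₀)]
  set r := min (δ₀ / 2) (min δ a)
  have hr : 0 < r := by positivity
  obtain ⟨δ₁, hδ₁, hsymm⟩ :=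
    Metric.continuousAt_iff.1 (L.symm.continuous.continuousAt (x := 0)) r hr
  simp only [hL0, dist_zero_right] at hsymm
  refine ⟨min (δ₁ / 2) r, by positivity, fun η hη => ?_⟩
  set η' := min (η / 4) (δ₀ / 4)
  obtain ⟨ε', hε', hF⟩ := h η' (by positivity)
  set κ := min (1 / 20) (ε' / 3)
  have hκ : κ / Real.exp a * Real.exp a = κ := div_mul_cancel₀ _ (Real.exp_ne_zero a)
  refine ⟨κ / Real.exp a, by positivity, fun f g hfg => ?_⟩
  have hsmall : 2 * (κ / Real.exp a) * Real.exp a ≤ 1 / 10 := by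
    rw [mul_assoc, hκ]
    linarith [min_le_left (1 / 20) (ε' / 3)]
  obtain ⟨F, hF⟩ := hF _ _ <| (hfg.expLift hi h₀ hsmall ha.le).mono subset_rfl <| by
    rw [mul_assoc, hκ]
    linarith [min_le_right (1 / 20) (ε' / 3)]
  have hconj := hF.conj_mapPair hi h₀ hfg hsmall hL hLip (δ₁ := min (δ₁ / 2) r) (r := r)
    (fun z hz => hsymm (hz.trans_le (by linarith [min_le_left (δ₁ / 2) r]))) (min_le_right _ _)
    ((min_le_right _ _).trans (min_le_left _ _)) ((min_le_right _ _).trans (min_le_right _ _))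
    (by linarith [min_le_left (δ₀ / 2) (min δ a), min_le_right (η / 4) (δ₀ / 4)])
  exact ⟨_, fun x => (hconj.dist_le x).trans (by linarith [min_le_left (η / 4) (δ₀ / 4)]),
    hconj.eqOn, hconj.eqOn_id⟩

theorem exists_canStraighten (S : Finset (Fin n)) : ∃ a > 0, ∃ δ > 0, CanStraighten S a δ := by
  induction S using Finset.induction_on with
  | empty =>
    exact ⟨1, one_pos, 1, one_pos, fun η hη =>
      ⟨η, hη, fun f g h => exists_isStraightening_empty h⟩⟩
  | insert i S hi ih =>
    rcases S.eq_empty_or_nonempty with rfl | ⟨i₀, h₀⟩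
    · refine ⟨20, by norm_num, 1 / 2, by norm_num, fun η hη =>
        ⟨min (1 / 1000) (η / 61), by positivity, fun f g h => ?_⟩⟩
      obtain ⟨F, hF⟩ := h.exists_isStraightening_singleton (min_le_left _ _)
      exact ⟨F, fun x => (hF.dist_le x).trans (by linarith [min_le_right (1 / 1000) (η / 61)]),
        hF.eqOn, hF.eqOn_id⟩
    · obtain ⟨a, ha, δ, hδ, h⟩ := ih
      exact ⟨_, by positivity, h.exists_insert (ne_of_mem_of_not_mem h₀ hi).symm h₀ ha hδ⟩

end Straightening

section Squash

variable {E : Type*} [NormedAddCommGroup E] [NormedSpace ℝ E] {b : ℝ} {F F' : E → E}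

/-- A homeomorphism of `E` onto the ball of radius `2`, the identity on the unit ball. -/
noncomputable def squash (x : E) : E := ((2 - (max 1 ‖x‖)⁻¹) * (max 1 ‖x‖)⁻¹) • x

/-- The inverse of `squash`, to be used on the ball of radius `2` only. -/
noncomputable def unsquash (y : E) : E := (max 1 ‖y‖ * (2 - max 1 ‖y‖))⁻¹ • y

omit [NormedSpace ℝ E] in
theorem inv_max_one_norm_mem_Ioc (x : E) : (max 1 ‖x‖)⁻¹ ∈ Ioc 0 1 :=
  ⟨by positivity, inv_le_one_of_one_le₀ (le_max_left _ _)⟩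

theorem squash_of_norm_le_one {x : E} (hx : ‖x‖ ≤ 1) : squash x = x := by
  rw [squash, max_eq_left hx]
  norm_num

theorem unsquash_of_norm_le_one {y : E} (hy : ‖y‖ ≤ 1) : unsquash y = y := by
  rw [unsquash, max_eq_left hy]
  norm_num

theorem max_one_norm_squash (x : E) : max 1 ‖squash x‖ = 2 - (max 1 ‖x‖)⁻¹ := by
  rcases le_total ‖x‖ 1 with hx | hx
  · rw [squash_of_norm_le_one hx, max_eq_left hx]
    norm_num
  · have hinv := inv_max_one_norm_mem_Ioc x
    have hpos : 0 < ‖x‖ := one_pos.trans_le hx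
    rw [squash, norm_smul, Real.norm_eq_abs,
      abs_of_pos (mul_pos (by linarith [hinv.2]) hinv.1)]
    rw [max_eq_right hx] at hinv ⊢
    rw [inv_mul_cancel_right₀ hpos.ne', max_eq_right (by linarith [hinv.2])]

theorem max_one_norm_unsquash {y : E} (hy : ‖y‖ < 2) :
    max 1 ‖unsquash y‖ = (2 - max 1 ‖y‖)⁻¹ := by
  rcases le_total ‖y‖ 1 with hy1 | hy1
  · rw [unsquash_of_norm_le_one hy1, max_eq_left hy1]
    norm_num
  · have hpos : 0 < ‖y‖ := one_pos.trans_le hy1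
    have h2 : 0 < 2 - ‖y‖ := sub_pos.2 hy
    rw [unsquash, max_eq_right hy1, norm_smul, Real.norm_eq_abs, abs_of_pos (by positivity),
      mul_inv_rev, inv_mul_cancel_right₀ hpos.ne',
      max_eq_right ((one_le_inv₀ h2).2 (by linarith))]

theorem norm_squash_lt (x : E) : ‖squash x‖ < 2 := by
  linarith [max_one_norm_squash x, le_max_right 1 ‖squash x‖, (inv_max_one_norm_mem_Ioc x).1]

theorem unsquash_squash (x : E) : unsquash (squash x) = x := by
  rw [unsquash, max_one_norm_squash, sub_sub_cancel, squash, smul_smul, inv_mul_cancel₀, one_smul]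
  have hinv := inv_max_one_norm_mem_Ioc x
  exact (mul_pos (by linarith [hinv.2]) hinv.1).ne'

theorem squash_unsquash {y : E} (hy : ‖y‖ < 2) : squash (unsquash y) = y := by
  have h2 : 0 < 2 - max 1 ‖y‖ := sub_pos.2 (max_lt one_lt_two hy)
  rw [squash, max_one_norm_unsquash hy, inv_inv, sub_sub_cancel, unsquash, smul_smul,
    mul_inv_cancel₀ (by positivity), one_smul]

theorem continuous_squash : Continuous (squash : E → E) := by
  have hinv : Continuous fun x : E => (max 1 ‖x‖)⁻¹ :=
    (continuous_const.max continuous_norm).inv₀ fun x => by positivity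
  exact ((continuous_const.sub hinv).mul hinv).smul continuous_id

theorem continuousOn_unsquash : ContinuousOn (unsquash : E → E) (ball 0 2) := by
  refine ContinuousOn.smul (ContinuousOn.inv₀ (by fun_prop) fun y hy => ?_) continuousOn_id
  have : 0 < 2 - max 1 ‖y‖ := sub_pos.2 (max_lt one_lt_two (mem_ball_zero_iff.1 hy))
  positivity

theorem dist_squash_le (x y : E) :
    dist (squash x) (squash y) ≤ 4 * dist x y * (max 1 ‖x‖)⁻¹ := by
  obtain ⟨hu0, hu1⟩ := inv_max_one_norm_mem_Ioc x
  obtain ⟨hv0, hv1⟩ := inv_max_one_norm_mem_Ioc y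
  have hmax : |max 1 ‖y‖ - max 1 ‖x‖| ≤ dist x y := by
    rw [dist_comm, dist_eq_norm]
    simpa using (abs_max_sub_max_le_max 1 ‖y‖ 1 ‖x‖).trans
      (max_le (by simp) (abs_norm_sub_norm_le y x))
  have huv : (max 1 ‖x‖)⁻¹ - (max 1 ‖y‖)⁻¹ =
      (max 1 ‖x‖)⁻¹ * (max 1 ‖y‖)⁻¹ * (max 1 ‖y‖ - max 1 ‖x‖) := by
    field_simp
  have hvy : (max 1 ‖y‖)⁻¹ * ‖y‖ ≤ 1 :=
    inv_mul_le_one_of_le₀ (le_max_right _ _) (by positivity)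
  unfold squash
  set u := (max 1 ‖x‖)⁻¹
  set v := (max 1 ‖y‖)⁻¹
  have hcoeff : |(2 - u) * u - (2 - v) * v| ≤ 2 * dist x y * (u * v) := by
    rw [show (2 - u) * u - (2 - v) * v = (2 - (u + v)) * (u - v) by ring, huv, abs_mul, abs_mul,
      abs_of_pos (mul_pos hu0 hv0), mul_comm (u * v), ← mul_assoc]
    gcongr
    exact abs_le.2 ⟨by linarith, by linarith⟩
  have hsplit : ((2 - u) * u) • x - ((2 - v) * v) • y =
      ((2 - u) * u) • (x - y) + ((2 - u) * u - (2 - v) * v) • y := by module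
  calc dist (((2 - u) * u) • x) (((2 - v) * v) • y)
      ≤ |(2 - u) * u| * dist x y + |(2 - u) * u - (2 - v) * v| * ‖y‖ := by
        rw [dist_eq_norm, hsplit, dist_eq_norm, ← Real.norm_eq_abs, ← norm_smul,
          ← Real.norm_eq_abs, ← norm_smul]
        exact norm_add_le _ _
    _ ≤ 2 * u * dist x y + 2 * dist x y * (u * v) * ‖y‖ := by
        gcongr
        rw [abs_of_nonneg (by nlinarith)]
        nlinarith
    _ = 2 * u * dist x y + 2 * dist x y * u * (v * ‖y‖) := by ring
    _ ≤ 2 * u * dist x y + 2 * dist x y * u * 1 := by gcongr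
    _ = 4 * dist x y * u := by ring

/-- The conjugate of `F` by `squash`, extended by the identity. -/
noncomputable def squashConj (F : E → E) (y : E) : E :=
  if ‖y‖ < 2 then squash (F (unsquash y)) else y

theorem squashConj_of_norm_lt {y : E} (hy : ‖y‖ < 2) :
    squashConj F y = squash (F (unsquash y)) :=
  if_pos hy

theorem squashConj_of_le_norm {y : E} (hy : 2 ≤ ‖y‖) : squashConj F y = y :=
  if_neg hy.not_gt

theorem squashConj_squashConj (h : ∀ x, F (F' x) = x) (y : E) :
    squashConj F (squashConj F' y) = y := by
  rcases lt_or_ge ‖y‖ 2 with hy | hy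
  · rw [squashConj_of_norm_lt hy, squashConj_of_norm_lt (norm_squash_lt _), unsquash_squash, h,
      squash_unsquash hy]
  · rw [squashConj_of_le_norm hy, squashConj_of_le_norm hy]

theorem dist_squashConj_le (hF : ∀ x, dist (F x) x ≤ b) (y : E) :
    dist (squashConj F y) y ≤ 4 * b * max 0 (2 - ‖y‖) := by
  have hb : 0 ≤ b := dist_nonneg.trans (hF 0)
  rcases lt_or_ge ‖y‖ 2 with hy | hy
  · have hdist := dist_squash_le (unsquash y) (F (unsquash y))
    rw [squash_unsquash hy, max_one_norm_unsquash hy, inv_inv, dist_comm, dist_comm (unsquash y)]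
      at hdist
    have h2 : 0 ≤ 2 - max 1 ‖y‖ := sub_nonneg.2 (max_le one_le_two hy.le)
    have hle : 2 - max 1 ‖y‖ ≤ max 0 (2 - ‖y‖) :=
      le_max_of_le_right (sub_le_sub_left (le_max_right _ _) 2)
    rw [squashConj_of_norm_lt hy]
    exact hdist.trans (by gcongr; exact hF _)
  · rw [squashConj_of_le_norm hy, dist_self]
    positivity

theorem continuous_squashConj (hc : Continuous F) (hF : ∀ x, dist (F x) x ≤ b) :
    Continuous (squashConj F) := by
  rw [continuous_iff_continuousAt]
  intro y
  rcases lt_or_ge ‖y‖ 2 with hy | hy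
  · have hmem := isOpen_ball.mem_nhds (mem_ball_zero_iff.2 hy)
    refine ((continuous_squash.comp hc).continuousAt.comp
      (continuousOn_unsquash.continuousAt hmem)).congr ?_
    filter_upwards [hmem] with z hz
    exact (squashConj_of_norm_lt (mem_ball_zero_iff.1 hz)).symm
  · have hbound : Continuous fun z : E => 4 * b * max 0 (2 - ‖z‖) + dist z y := by fun_prop
    have hlim := hbound.tendsto y
    rw [dist_self, add_zero, max_eq_left (by linarith), mul_zero] at hlim
    rw [ContinuousAt, squashConj_of_le_norm hy, tendsto_iff_dist_tendsto_zero]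
    refine squeeze_zero (fun _ => dist_nonneg) (fun z => ?_) hlim
    exact (dist_triangle _ z _).trans (by linarith [dist_squashConj_le hF z])

theorem exists_homeomorph_eqOn_closedBall_eqOn_id (F : E ≃ₜ E) (hb : b ≤ 1 / 4)
    (hF : ∀ x, dist (F x) x ≤ b) :
    ∃ G : E ≃ₜ E, (∀ y, dist (G y) y ≤ 8 * b) ∧ EqOn G F (closedBall 0 (3 / 4)) ∧
      (∀ y, 2 ≤ ‖y‖ → G y = y) ∧ ∀ y, (∀ t : ℝ, 1 ≤ t → F (t • y) = t • y) → G y = y := by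
  have hsymm (x : E) : dist (F.symm x) x ≤ b := by
    simpa [dist_comm] using hF (F.symm x)
  refine ⟨⟨⟨squashConj F, squashConj F.symm, squashConj_squashConj F.symm_apply_apply,
    squashConj_squashConj F.apply_symm_apply⟩, continuous_squashConj F.continuous hF,
    continuous_squashConj F.symm.continuous hsymm⟩, fun y => ?_, fun y hy => ?_,
    fun y hy => squashConj_of_le_norm hy, fun y hy => ?_⟩
  · have h2 : max 0 (2 - ‖y‖) ≤ 2 := max_le zero_le_two (by linarith [norm_nonneg y])
    exact (dist_squashConj_le hF y).trans (by nlinarith [dist_nonneg.trans (hF 0)])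
  · rw [mem_closedBall_zero_iff] at hy
    have hFy : ‖F y‖ ≤ 1 := by
      linarith [norm_le_norm_add_norm_sub' (F y) y, dist_eq_norm (F y) y, hF y]
    change squashConj F y = F y
    rw [squashConj_of_norm_lt (by linarith), unsquash_of_norm_le_one (by linarith),
      squash_of_norm_le_one hFy]
  · change squashConj F y = y
    rcases lt_or_ge ‖y‖ 2 with hy2 | hy2
    · have h2 : max 1 ‖y‖ < 2 := max_lt one_lt_two hy2
      have hfix : F (unsquash y) = unsquash y := by
        refine hy _ ((one_le_inv₀ (mul_pos (by positivity) (by linarith))).2 ?_)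
        nlinarith [sq_nonneg (max 1 ‖y‖ - 1)]
      rw [squashConj_of_norm_lt hy2, hfix, squash_unsquash hy2]
    · exact squashConj_of_le_norm hy2

end Squash

section Handle

variable {n : ℕ} {S : Finset (Fin n)} {a δ ε η r s R ρ : ℝ} {c x y : Fin n → ℝ}
  {f g : (Fin n → ℝ) → Fin n → ℝ} {G : (Fin n → ℝ) ≃ₜ (Fin n → ℝ)}

/-- The open box with centre `c`, of half-width `r` in the coordinates from `S` and of half-width
`s` in the others. With `s = 1 / 2` it is a neighbourhood of a grid cube normal to `S`. -/
def box (S : Finset (Fin n)) (r s : ℝ) (c : Fin n → ℝ) : Set (Fin n → ℝ) :=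
  {x | (∀ i ∈ S, |x i - c i| < r) ∧ ∀ i ∉ S, |x i - c i| < s}

/-- The points at which some coordinate not in `S` comes within `ρ` of the boundary of the grid cube
normal to `S` with centre `c`, or lies beyond it. -/
def collar (S : Finset (Fin n)) (ρ : ℝ) (c : Fin n → ℝ) : Set (Fin n → ℝ) :=
  {x | ∃ i ∉ S, 1 / 2 - ρ ≤ |x i - c i|}

theorem box_subset_box {r' s' : ℝ} (hr : r ≤ r') (hs : s ≤ s') : box S r s c ⊆ box S r' s' c :=
  fun _ hx => ⟨fun i hi => (hx.1 i hi).trans_le hr, fun i hi => (hx.2 i hi).trans_le hs⟩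

theorem isOpen_box (S : Finset (Fin n)) (r s : ℝ) (c : Fin n → ℝ) : IsOpen (box S r s c) := by
  have hopen (T : Finset (Fin n)) (t : ℝ) : IsOpen {x : Fin n → ℝ | ∀ i ∈ T, |x i - c i| < t} := by
    simp only [ofPred_forall]
    exact isOpen_biInter_finset fun i _ => isOpen_lt (by fun_prop) continuous_const
  simpa [box, Set.ext_iff] using! (hopen S r).inter (hopen Sᶜ s)

theorem abs_sub_lt_of_notMem_collar (hx : x ∉ collar S ρ c) {i : Fin n} (hi : i ∉ S) :
    |x i - c i| < 1 / 2 - ρ :=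
  not_le.1 fun h => hx ⟨i, hi, h⟩

theorem isCylinder_collar (S : Finset (Fin n)) (ρ : ℝ) (c : Fin n → ℝ) :
    IsCylinder S (collar S ρ c) := by
  rintro x ⟨i, hi, hx⟩ y hy
  exact ⟨i, hi, by rwa [hy i hi]⟩

theorem smul_mem_collar_zero {t : ℝ} (ht : 1 ≤ t) (hx : x ∈ collar S ρ 0) :
    t • x ∈ collar S ρ 0 := by
  obtain ⟨i, hi, hx⟩ := hx
  refine ⟨i, hi, hx.trans ?_⟩
  simp only [Pi.zero_apply, sub_zero, Pi.smul_apply, smul_eq_mul, abs_mul]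
  exact le_mul_of_one_le_left (abs_nonneg _) (ht.trans (le_abs_self t))

theorem slab_subset_interior_collar_union_box (hρ : 0 < ρ) :
    slab S a ⊆ interior (collar S ρ 0) ∪ box S a (1 / 2) 0 := by
  intro x hx
  by_cases h : ∀ i ∉ S, |x i| < 1 / 2
  · exact Or.inr ⟨fun i hi => by simpa using hx i hi, fun i hi => by simpa using h i hi⟩
  · push Not at h
    obtain ⟨i, hi, hxi⟩ := h
    refine Or.inl (mem_interior.2 ⟨{y | 1 / 2 - ρ < |y i|}, fun y hy => ⟨i, hi, ?_⟩,
      isOpen_lt continuous_const (by fun_prop), show 1 / 2 - ρ < |x i| by linarith⟩)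
    simpa using (show 1 / 2 - ρ < |y i| from hy).le

theorem mem_box_of_notMem_collar (hε : ε ≤ ρ) (hxy : dist y x ≤ ε) (hx : x ∉ collar S ρ 0)
    (hy : y ∈ slab S a) : y ∈ box S a (1 / 2) 0 := by
  refine ⟨fun i hi => by simpa using hy i hi, fun i hi => ?_⟩
  have h1 := abs_sub_lt_of_notMem_collar hx hi
  have h2 := abs_apply_sub_apply_le hxy i
  have h3 := abs_sub_abs_le_abs_sub (y i) (x i)
  simp only [Pi.zero_apply, sub_zero] at h1 ⊢
  linarith

open scoped Classical in
theorem NearInverseOn.piecewise_collar (h : NearInverseOn ε f g (box S a (1 / 2) 0)) (hε : 0 ≤ ε)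
    (hερ : ε ≤ ρ) (hρ : 0 < ρ) (hf : EqOn f id (box S a (1 / 2) 0 ∩ collar S ρ 0)) :
    NearInverseOn ε ((collar S ρ 0).piecewise id f) ((collar S ρ 0).piecewise id g) (slab S a) :=
  h.piecewise_id hε (isOpen_box S a _ 0) (slab_subset_interior_collar_union_box hρ) hf
    (h.eqOn_right_id hf)
    (fun x hx => mem_box_of_notMem_collar hερ (h.dist_left_le x hx.1) hx.2)
    fun x hx => mem_box_of_notMem_collar hερ (h.dist_right_le x hx.1) hx.2

/-- `G` extends `f : box S R (1 / 2) c → ℝⁿ` from the box thinned to half-width `r` normally to the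
cube with centre `c`; it is `η`-close to the identity, and it is the identity on the collar and
at normal distance at least `R` from the cube. -/
structure IsHandleExtension (S : Finset (Fin n)) (R r ρ η : ℝ) (c : Fin n → ℝ)
    (f : (Fin n → ℝ) → Fin n → ℝ) (G : (Fin n → ℝ) ≃ₜ (Fin n → ℝ)) : Prop where
  dist_le : ∀ x, dist (G x) x ≤ η
  eqOn : EqOn G f (box S r (1 / 2) c)
  eqOn_collar : EqOn G id (collar S ρ c)
  eq_of_le : ∀ x, (∃ i ∈ S, R ≤ |x i - c i|) → G x = x

theorem IsStraightening.exists_isHandleExtension {F : (Fin n → ℝ) ≃ₜ (Fin n → ℝ)}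
    {f' : (Fin n → ℝ) → Fin n → ℝ} (hF : IsStraightening S a δ η f' F) (hη : η ≤ 1 / 4)
    (hid : EqOn f' id (collar S ρ 0)) (hf : EqOn f' f (box S (3 / 4) (1 / 2) 0)) :
    ∃ G, IsHandleExtension S 2 (min (3 / 4) δ) ρ (8 * η) 0 f G := by
  obtain ⟨G, hdist, hGF, hfar, hray⟩ :=
    exists_homeomorph_eqOn_closedBall_eqOn_id F hη hF.dist_le
  have hcollar : EqOn G id (collar S ρ 0) := fun x hx => hray x fun t ht =>
    hF.eqOn_id _ (isCylinder_collar S ρ 0) (hid.mono inter_subset_left) (smul_mem_collar_zero ht hx)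
  refine ⟨G, hdist, fun x hx => ?_, hcollar, fun x ⟨i, _, hx⟩ => hfar x (hx.trans ?_)⟩
  · have hfx : f' x = f x :=
      hf (box_subset_box (min_le_left _ _) le_rfl hx)
    have hnorm : x ∈ closedBall (0 : Fin n → ℝ) (3 / 4) := by
      rw [mem_closedBall_zero_iff, pi_norm_le_iff_of_nonneg (by norm_num)]
      intro i
      by_cases hi : i ∈ S
      · simpa using ((hx.1 i hi).trans_le (min_le_left _ _)).le
      · simpa using (hx.2 i hi).le.trans (by norm_num : (1 : ℝ) / 2 ≤ 3 / 4)
    rw [hGF hnorm, hF.eqOn fun i hi => by simpa using (hx.1 i hi).trans_le (min_le_right _ _), hfx]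
  · simpa using norm_le_pi_norm x i

/-- The homeomorphism moving `c` to the origin and stretching by `K` in the coordinates from
`S`. -/
noncomputable def stretch (S : Finset (Fin n)) {K : NNReal} (hK : 1 ≤ K) (c : Fin n → ℝ) :
    (Fin n → ℝ) ≃ₜ (Fin n → ℝ) :=
  (Homeomorph.subRight c).trans (Homeomorph.piCongrRight fun i =>
    Homeomorph.mulLeft₀ (if i ∈ S then (K : ℝ) else 1) (by
      have : (0 : ℝ) < K := zero_lt_one.trans_le hK
      split_ifs <;> positivity))

section Stretch

variable {K : NNReal} (hK : 1 ≤ K)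

theorem stretch_apply (x : Fin n → ℝ) (i : Fin n) :
    stretch S hK c x i = (if i ∈ S then (K : ℝ) else 1) * (x i - c i) := rfl

theorem stretch_apply_of_mem {i : Fin n} (hi : i ∈ S) : stretch S hK c x i = K * (x i - c i) := by
  rw [stretch_apply, if_pos hi]

theorem stretch_apply_of_notMem {i : Fin n} (hi : i ∉ S) : stretch S hK c x i = x i - c i := by
  rw [stretch_apply, if_neg hi, one_mul]

theorem lipschitzWith_stretch : LipschitzWith K (stretch S hK c) := by
  refine LipschitzWith.of_dist_le_mul fun x y =>
    (dist_pi_le_iff (by positivity)).2 fun i => ?_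
  have hxy := dist_le_pi_dist x y i
  rw [Real.dist_eq] at hxy ⊢
  by_cases hi : i ∈ S
  · rw [stretch_apply_of_mem hK hi, stretch_apply_of_mem hK hi, ← mul_sub, abs_mul,
      abs_of_nonneg K.coe_nonneg, sub_sub_sub_cancel_right]
    gcongr
  · rw [stretch_apply_of_notMem hK hi, stretch_apply_of_notMem hK hi, sub_sub_sub_cancel_right]
    nlinarith [abs_nonneg (x i - y i), show (1 : ℝ) ≤ K from hK]

theorem dist_le_dist_stretch (x y : Fin n → ℝ) :
    dist x y ≤ dist (stretch S hK c x) (stretch S hK c y) := by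
  refine (dist_pi_le_iff dist_nonneg).2 fun i => ?_
  have hxy := dist_le_pi_dist (stretch S hK c x) (stretch S hK c y) i
  rw [Real.dist_eq] at hxy ⊢
  by_cases hi : i ∈ S
  · rw [stretch_apply_of_mem hK hi, stretch_apply_of_mem hK hi, ← mul_sub, abs_mul,
      abs_of_nonneg K.coe_nonneg, sub_sub_sub_cancel_right] at hxy
    nlinarith [abs_nonneg (x i - y i), show (1 : ℝ) ≤ K from hK]
  · rwa [stretch_apply_of_notMem hK hi, stretch_apply_of_notMem hK hi,
      sub_sub_sub_cancel_right] at hxy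

theorem abs_stretch_apply_of_mem {i : Fin n} (hi : i ∈ S) :
    |stretch S hK c x i| = K * |x i - c i| := by
  rw [stretch_apply_of_mem hK hi, abs_mul, abs_of_nonneg K.coe_nonneg]

theorem stretch_mem_collar_iff : stretch S hK c x ∈ collar S ρ 0 ↔ x ∈ collar S ρ c := by
  refine exists_congr fun i => and_congr_right fun hi => ?_
  rw [stretch_apply_of_notMem hK hi, Pi.zero_apply, sub_zero]

theorem stretch_mem_box_iff :
    stretch S hK c x ∈ box S (K * r) s 0 ↔ x ∈ box S r s c := by
  have hK' : (0 : ℝ) < K := zero_lt_one.trans_le hK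
  refine and_congr (forall₂_congr fun i hi => ?_) (forall₂_congr fun i hi => ?_)
  · rw [Pi.zero_apply, sub_zero, abs_stretch_apply_of_mem hK hi, mul_lt_mul_iff_right₀ hK']
  · rw [stretch_apply_of_notMem hK hi, Pi.zero_apply, sub_zero]

theorem IsHandleExtension.conj_stretch {R' r' : ℝ} (hr : K * r ≤ r') (hR : R' ≤ K * R)
    (hG : IsHandleExtension S R' r' ρ η 0 (stretch S hK c ∘ f ∘ (stretch S hK c).symm) G) :
    IsHandleExtension S R r ρ η c f (((stretch S hK c).trans G).trans (stretch S hK c).symm) where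
  dist_le x := by
    refine (dist_le_dist_stretch hK (S := S) (c := c) _ _).trans ?_
    simpa using hG.dist_le (stretch S hK c x)
  eqOn x hx := by
    have := hG.eqOn (box_subset_box hr le_rfl ((stretch_mem_box_iff hK).2 hx))
    simpa [Homeomorph.symm_apply_eq] using this
  eqOn_collar x hx := by
    have := hG.eqOn_collar ((stretch_mem_collar_iff hK).2 hx)
    simpa [Homeomorph.symm_apply_eq] using this
  eq_of_le x := by
    rintro ⟨i, hi, hx⟩
    have := hG.eq_of_le (stretch S hK c x) ⟨i, hi, hR.trans ?_⟩
    · simpa [Homeomorph.symm_apply_eq] using this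
    · rw [Pi.zero_apply, sub_zero, abs_stretch_apply_of_mem hK hi]
      gcongr

end Stretch

theorem CanStraighten.exists_isHandleExtension_zero (h : CanStraighten S a δ) (haR : a ≤ R)
    (hR : 2 ≤ R) (hρ : 0 < ρ) (hη : 0 < η) :
    ∃ ε > 0, ∀ f g, NearInverseOn ε f g (box S R (1 / 2) 0) →
      EqOn f id (box S R (1 / 2) 0 ∩ collar S ρ 0) →
      ∃ G, IsHandleExtension S 2 (min (3 / 4) δ) ρ η 0 f G := by
  classical
  obtain ⟨ε, hε, h⟩ := h (min (1 / 4) (η / 8)) (by positivity)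
  refine ⟨min ρ ε, by positivity, fun f g hfg hf => ?_⟩
  have hff : EqOn ((collar S ρ 0).piecewise id f) f (box S (3 / 4) (1 / 2) 0) := fun x hx => by
    by_cases hxc : x ∈ collar S ρ 0
    · rw [piecewise_eq_of_mem _ _ _ hxc, hf ⟨box_subset_box (by linarith) le_rfl hx, hxc⟩]
    · rw [piecewise_eq_of_notMem _ _ _ hxc]
  obtain ⟨F, hF⟩ := h _ _ ((hfg.piecewise_collar (by positivity) (min_le_left _ _) hρ hf).mono
    (slab_subset_slab subset_rfl haR) (min_le_right _ _))
  obtain ⟨G, hG⟩ := hF.exists_isHandleExtension (f := f) (min_le_left _ _)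
    (fun x hx => piecewise_eq_of_mem _ _ _ hx) hff
  exact ⟨G, { hG with
    dist_le := fun x => (hG.dist_le x).trans (by linarith [min_le_right (1 / 4) (η / 8)]) }⟩

theorem exists_isHandleExtension (S : Finset (Fin n)) (hρ : 0 < ρ) :
    ∃ r ∈ Ioc 0 ρ, ∀ η > 0, ∃ ε > 0, ∀ c f g, NearInverseOn ε f g (box S ρ (1 / 2) c) →
      EqOn f id (box S ρ (1 / 2) c ∩ collar S ρ c) → ∃ G, IsHandleExtension S ρ r ρ η c f G := by
  obtain ⟨a, -, δ, hδ, h⟩ := exists_canStraighten S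
  obtain ⟨K, hK, hKρ⟩ : ∃ K : NNReal, 1 ≤ K ∧ max a 2 ≤ K * ρ := by
    refine ⟨max 1 (max a 2 / ρ).toNNReal, le_max_left _ _, ?_⟩
    rw [← div_le_iff₀ hρ, NNReal.coe_max]
    exact (Real.le_coe_toNNReal _).trans (le_max_right _ _)
  have hK0 : (0 : ℝ) < K := zero_lt_one.trans_le hK
  refine ⟨min ρ (min (3 / 4) δ / K), ⟨by positivity, min_le_left _ _⟩, fun η hη => ?_⟩
  obtain ⟨ε, hε, h⟩ := h.exists_isHandleExtension_zero ((le_max_left _ _).trans hKρ)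
    ((le_max_right _ _).trans hKρ) hρ hη
  refine ⟨ε / K, by positivity, fun c f g hfg hf => ?_⟩
  have hsymm {x : Fin n → ℝ} (hx : x ∈ box S (K * ρ) (1 / 2) 0) :
      (stretch S hK c).symm x ∈ box S ρ (1 / 2) c := by
    rwa [← stretch_mem_box_iff hK, Homeomorph.apply_symm_apply]
  have hfid : EqOn (stretch S hK c ∘ f ∘ (stretch S hK c).symm) id
      (box S (K * ρ) (1 / 2) 0 ∩ collar S ρ 0) := fun x hx => by
    have := hf ⟨hsymm hx.1, by
      rw [← stretch_mem_collar_iff hK, Homeomorph.apply_symm_apply]; exact hx.2⟩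
    simp only [Function.comp_apply, id] at this ⊢
    rw [this, Homeomorph.apply_symm_apply]
  obtain ⟨G, hG⟩ := h _ _ ((hfg.conj _ (lipschitzWith_stretch hK (S := S) (c := c))).mono
    (fun x hx => hsymm hx) (mul_div_cancel₀ _ hK0.ne').le) hfid
  refine ⟨_, hG.conj_stretch hK ?_ ((le_max_right _ _).trans hKρ)⟩
  rw [← le_div_iff₀' hK0]
  exact min_le_right _ _

end Handle

section Grid

variable {n : ℕ} {ε η r s ρ : ℝ} {x : Fin n → ℝ} {f g : (Fin n → ℝ) → Fin n → ℝ}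

theorem intCast_unique_of_abs_sub_lt {p q : ℤ} {t : ℝ} (hp : |t - p| < r) (hq : |t - q| < s)
    (h : r + s ≤ 1) : p = q := by
  rw [abs_lt] at hp hq
  have hpq : (p : ℝ) < q + 1 := by linarith
  have hqp : (q : ℝ) < p + 1 := by linarith
  norm_cast at hpq hqp
  omega

/-- The cubes, of all dimensions, of the unit grid of `ℝⁿ`: the pair `(S, v)` stands for the cube
`{x | x i = v i for i ∈ S, v i ≤ x i ≤ v i + 1 for i ∉ S}`. -/
abbrev GridCube (n : ℕ) : Type := Finset (Fin n) × (Fin n → ℤ)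

namespace GridCube

variable {e e' : GridCube n} {i : Fin n} {Z : Finset (GridCube n)} {Ω : Set (Fin n → ℝ)}

/-- The midpoint of a grid cube. -/
noncomputable def center (e : GridCube n) (i : Fin n) : ℝ :=
  if i ∈ e.1 then e.2 i else e.2 i + 1 / 2

/-- The open `ρ`-neighbourhood of a grid cube. -/
def nhd (ρ : ℝ) (e : GridCube n) : Set (Fin n → ℝ) := box e.1 ρ (1 / 2 + ρ) e.center

/-- The face of `e` on which the `i`-th coordinate is minimal. -/
def lowerFace (e : GridCube n) (i : Fin n) : GridCube n := (insert i e.1, e.2)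

/-- The face of `e` on which the `i`-th coordinate is maximal. -/
def upperFace (e : GridCube n) (i : Fin n) : GridCube n :=
  (insert i e.1, Function.update e.2 i (e.2 i + 1))

theorem center_of_mem (hi : i ∈ e.1) : e.center i = e.2 i := if_pos hi

theorem center_of_notMem (hi : i ∉ e.1) : e.center i = e.2 i + 1 / 2 := if_neg hi

theorem nhd_mono {r : ℝ} (h : r ≤ ρ) : e.nhd r ⊆ e.nhd ρ := box_subset_box h (by linarith)

theorem mem_nhd_iff : x ∈ e.nhd ρ ↔
    ∀ i, |x i - e.center i| < ρ + if i ∈ e.1 then 0 else 1 / 2 := by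
  refine ⟨fun hx i => ?_, fun hx => ⟨fun i hi => ?_, fun i hi => ?_⟩⟩
  · split_ifs with hi
    · simpa using hx.1 i hi
    · simpa [add_comm] using hx.2 i hi
  · simpa [hi] using hx i
  · simpa [hi, add_comm] using hx i

theorem mem_nhd_lowerFace_or_mem_nhd_upperFace (hx : x ∈ e.nhd ρ) (hi : i ∉ e.1)
    (h : 1 / 2 - ρ < |x i - e.center i|) :
    x ∈ (e.lowerFace i).nhd ρ ∨ x ∈ (e.upperFace i).nhd ρ := by
  simp only [mem_nhd_iff] at hx ⊢
  have hxi := hx i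
  rw [center_of_notMem hi, if_neg hi, abs_lt] at hxi
  rw [center_of_notMem hi, lt_abs] at h
  rcases h with h | h
  · refine Or.inr fun j => ?_
    rcases eq_or_ne j i with rfl | hj
    · simp only [upperFace, center, Finset.mem_insert_self, if_true, Function.update_self, abs_lt]
      push_cast
      constructor <;> linarith
    · simpa [upperFace, center, hj] using hx j
  · refine Or.inl fun j => ?_
    rcases eq_or_ne j i with rfl | hj
    · simp only [lowerFace, center, Finset.mem_insert_self, if_true, abs_lt]
      constructor <;> linarith
    · simpa [lowerFace, center, hj] using hx j

theorem eq_of_mem_box_of_mem_nhd (hρ : ρ ≤ 1 / 2) (hx : x ∈ box e.1 ρ (1 / 2 - ρ) e.center)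
    (hx' : x ∈ e'.nhd ρ) (hcard : e.1.card ≤ e'.1.card) : e' = e := by
  have hsub : e'.1 ⊆ e.1 := by
    intro i hi'
    by_contra hi
    have h1 := hx.2 i hi
    have h2 := hx'.1 i hi'
    rw [center_of_notMem hi, abs_lt] at h1
    rw [center_of_mem hi', abs_lt] at h2
    have hlt : (e.2 i : ℝ) < e'.2 i := by linarith
    have hlt' : (e'.2 i : ℝ) < e.2 i + 1 := by linarith
    norm_cast at hlt hlt'
    omega
  have hS : e'.1 = e.1 := Finset.eq_of_subset_of_card_le hsub hcard
  refine Prod.ext hS (funext fun i => ?_)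
  by_cases hi : i ∈ e.1
  · have h1 := hx.1 i hi
    have h2 := hx'.1 i (hS ▸ hi)
    rw [center_of_mem hi] at h1
    rw [center_of_mem (hS ▸ hi)] at h2
    exact intCast_unique_of_abs_sub_lt h2 h1 (by linarith)
  · have hi' : i ∉ e'.1 := hS ▸ hi
    have h1 := hx.2 i hi
    have h2 := hx'.2 i hi'
    rw [center_of_notMem hi, add_comm, ← sub_sub] at h1
    rw [center_of_notMem hi', add_comm (e'.2 i : ℝ), ← sub_sub] at h2
    exact intCast_unique_of_abs_sub_lt h2 h1 (by linarith)

/-- The family `Z` contains the facets of the cube `e`. -/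
def FacesMem (e : GridCube n) (Z : Finset (GridCube n)) : Prop :=
  ∀ i ∉ e.1, e.lowerFace i ∈ Z ∧ e.upperFace i ∈ Z

/-- The open `ρ`-neighbourhood of the union of a family of grid cubes. -/
def unionNhd (ρ : ℝ) (Z : Finset (GridCube n)) : Set (Fin n → ℝ) := ⋃ e ∈ Z, e.nhd ρ

theorem mem_unionNhd (he : e ∈ Z) (hx : x ∈ e.nhd ρ) : x ∈ unionNhd ρ Z := mem_biUnion he hx

theorem FacesMem.mem_unionNhd (h : e.FacesMem Z) (hx : x ∈ e.nhd ρ)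
    (hc : x ∈ collar e.1 r e.center) (hr : r < ρ) : x ∈ unionNhd ρ Z := by
  obtain ⟨i, hi, hxi⟩ := hc
  exact (mem_nhd_lowerFace_or_mem_nhd_upperFace hx hi (by linarith)).elim
    (GridCube.mem_unionNhd (h i hi).1) (GridCube.mem_unionNhd (h i hi).2)

variable {F G : (Fin n → ℝ) ≃ₜ (Fin n → ℝ)}

theorem eq_self_of_mem_nhd (hG : IsHandleExtension e.1 ρ r ρ η e.center f G) (hρ : ρ ≤ 1 / 2)
    (hx : x ∈ e'.nhd ρ) (hcard : e.1.card ≤ e'.1.card) (he : e' ≠ e) : G x = x := by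
  have hbox : x ∉ box e.1 ρ (1 / 2 - ρ) e.center := fun h =>
    he (eq_of_mem_box_of_mem_nhd hρ h hx hcard)
  by_cases hcollar : x ∈ collar e.1 ρ e.center
  · exact hG.eqOn_collar hcollar
  · by_contra hGx
    exact hbox ⟨fun i hi => not_le.1 fun h => hGx (hG.eq_of_le x ⟨i, hi, h⟩),
      fun i hi => abs_sub_lt_of_notMem_collar hcollar hi⟩

theorem eqOn_unionNhd_insert (hF : EqOn F f (unionNhd ρ Z)) (he : e ∉ Z) (hfaces : e.FacesMem Z)
    (hcard : ∀ e' ∈ Z, e.1.card ≤ e'.1.card) (hρ : 0 < ρ) (hρ1 : ρ ≤ 1) (hr : r ≤ ρ / 2)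
    (hG : IsHandleExtension e.1 (ρ / 2) r (ρ / 2) η e.center (F.symm ∘ f) G) :
    EqOn (G.trans F) f (unionNhd r (insert e Z)) := by
  intro x hx
  obtain ⟨e', he', hxr⟩ := mem_iUnion₂.1 hx
  have hxρ : x ∈ e'.nhd ρ := nhd_mono (by linarith) hxr
  rcases Finset.mem_insert.1 he' with rfl | he'
  · by_cases hin : ∀ i ∉ e'.1, |x i - e'.center i| < 1 / 2
    · simp [hG.eqOn ⟨hxr.1, hin⟩]
    · push Not at hin
      obtain ⟨i, hi, hxi⟩ := hin
      have hc : x ∈ collar e'.1 (ρ / 2) e'.center := ⟨i, hi, by linarith⟩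
      simpa [hG.eqOn_collar hc] using hF (hfaces.mem_unionNhd hxρ hc (by linarith))
  · have hGx : G x = x := eq_self_of_mem_nhd hG (by linarith) (nhd_mono hr hxr) (hcard e' he')
      (ne_of_mem_of_not_mem he' he)
    simpa [hGx] using hF (mem_unionNhd he' hxρ)

end GridCube

/-- Maps near the identity on `Ω` extend from `V ⊆ Ω` to homeomorphisms of `ℝⁿ` near the
identity. -/
def CanExtendFrom (Ω V : Set (Fin n → ℝ)) : Prop :=
  ∀ η > 0, ∃ ε > 0, ∀ f g, NearInverseOn ε f g Ω →
    ∃ F : (Fin n → ℝ) ≃ₜ (Fin n → ℝ), (∀ x, dist (F x) x ≤ η) ∧ EqOn F f V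

variable {e : GridCube n} {Z : Finset (GridCube n)} {Ω V C : Set (Fin n → ℝ)}

theorem CanExtendFrom.mono (h : CanExtendFrom Ω V) (hC : C ⊆ V) : CanExtendFrom Ω C := by
  intro η hη
  obtain ⟨ε, hε, h⟩ := h η hη
  refine ⟨ε, hε, fun f g hfg => ?_⟩
  obtain ⟨F, hF, hFf⟩ := h f g hfg
  exact ⟨F, hF, hFf.mono hC⟩

open GridCube

theorem box_subset_closedBall {S : Finset (Fin n)} {c : Fin n → ℝ} (hs : 0 ≤ s) (hr : r ≤ s) :
    box S r s c ⊆ closedBall c s := fun x hx => by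
  refine (dist_pi_le_iff hs).2 fun i => ?_
  by_cases hi : i ∈ S
  · exact (hx.1 i hi).le.trans hr
  · exact (hx.2 i hi).le

theorem box_subset_inter_preimage {S : Finset (Fin n)} {c : Fin n → ℝ} (hs : 0 ≤ s) (hr : r ≤ s)
    (hΩ : closedBall c (s + η) ⊆ Ω) {F : (Fin n → ℝ) → Fin n → ℝ} (hF : ∀ x, dist (F x) x ≤ η) :
    box S r s c ⊆ Ω ∩ F ⁻¹' Ω := fun x hx => by
  have hxc : dist x c ≤ s := box_subset_closedBall hs hr hx
  have hη : 0 ≤ η := dist_nonneg.trans (hF x)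
  exact ⟨hΩ (mem_closedBall.2 (by linarith)),
    hΩ (mem_closedBall.2 ((dist_triangle _ x _).trans (by linarith [hF x])))⟩

theorem CanExtendFrom.exists_unionNhd_insert (h : CanExtendFrom Ω (unionNhd ρ Z)) (hρ : 0 < ρ)
    (hρ1 : ρ ≤ 1) (hΩ : closedBall e.center 1 ⊆ Ω) (he : e ∉ Z)
    (hcard : ∀ e' ∈ Z, e.1.card ≤ e'.1.card) (hfaces : e.FacesMem Z) :
    ∃ r ∈ Ioc 0 ρ, CanExtendFrom Ω (unionNhd r (insert e Z)) := by
  obtain ⟨r, ⟨hr, hrρ⟩, hhandle⟩ := exists_isHandleExtension e.1 (half_pos hρ)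
  refine ⟨r, ⟨hr, by linarith⟩, fun η hη => ?_⟩
  obtain ⟨ε₁, hε₁, hhandle⟩ := hhandle (η / 2) (by positivity)
  set η' := min (1 / 2) (min (η / 2) (ε₁ / 2))
  have hη'_half : η' ≤ 1 / 2 := min_le_left _ _
  have hη'η : η' ≤ η / 2 := (min_le_right _ _).trans (min_le_left _ _)
  have hη'ε : η' ≤ ε₁ / 2 := (min_le_right _ _).trans (min_le_right _ _)
  obtain ⟨ε₂, hε₂, h⟩ := h η' (by positivity)
  refine ⟨min ε₂ (ε₁ / 2), by positivity, fun f g hfg => ?_⟩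
  obtain ⟨F, hF, hFf⟩ := h f g (hfg.mono subset_rfl (min_le_left _ _))
  have hbox : box e.1 (ρ / 2) (1 / 2) e.center ⊆ Ω ∩ F ⁻¹' Ω :=
    box_subset_inter_preimage (by norm_num) (by linarith)
      ((closedBall_subset_closedBall (by linarith)).trans hΩ) hF
  obtain ⟨G, hG⟩ := hhandle _ _ _ ((hfg.symm_comp F hF).mono hbox
    (by linarith [min_le_right ε₂ (ε₁ / 2)])) fun x hx => by
      have := hFf (hfaces.mem_unionNhd
        (box_subset_box (by linarith) (by linarith) hx.1) hx.2 (by linarith))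
      simp [← this]
  refine ⟨G.trans F, fun x => (dist_triangle _ (G x) x).trans ?_,
    eqOn_unionNhd_insert hFf he hfaces hcard hρ hρ1 hrρ hG⟩
  linarith [hG.dist_le x, show dist (G.trans F x) (G x) ≤ η' from hF (G x)]

theorem exists_canExtendFrom_unionNhd (Z : Finset (GridCube n))
    (hΩ : ∀ e ∈ Z, closedBall e.center 1 ⊆ Ω) (hfaces : ∀ e ∈ Z, e.FacesMem Z) :
    ∃ ρ ∈ Ioc 0 1, CanExtendFrom Ω (unionNhd ρ Z) := by
  induction Z using Finset.strongInduction with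
  | H Z ih =>
  rcases Z.eq_empty_or_nonempty with rfl | hZ
  · exact ⟨1, by norm_num, fun η hη => ⟨1, one_pos, fun f g _ =>
      ⟨Homeomorph.refl _, fun x => by simpa using hη.le, by simp [unionNhd]⟩⟩⟩
  obtain ⟨e, he, hmin⟩ := Finset.exists_min_image Z (fun e => e.1.card) hZ
  have hfaces' (e' : GridCube n) (he' : e' ∈ Z) : e'.FacesMem (Z.erase e) := fun i hi => by
    have hne {w : Fin n → ℤ} : (insert i e'.1, w) ≠ e := by
      rintro rfl
      have := hmin e' he'
      rw [Finset.card_insert_of_notMem hi] at this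
      omega
    exact ⟨Finset.mem_erase.2 ⟨hne, (hfaces e' he' i hi).1⟩,
      Finset.mem_erase.2 ⟨hne, (hfaces e' he' i hi).2⟩⟩
  obtain ⟨ρ, hρ, h⟩ := ih (Z.erase e) (Finset.erase_ssubset he)
    (fun e' he' => hΩ e' (Finset.mem_of_mem_erase he'))
    fun e' he' => hfaces' e' (Finset.mem_of_mem_erase he')
  obtain ⟨r, hr, h⟩ := h.exists_unionNhd_insert hρ.1 hρ.2 (hΩ e he) (Finset.notMem_erase e Z)
    (fun e' he' => hmin e' (Finset.mem_of_mem_erase he')) (hfaces' e he)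
  exact ⟨r, ⟨hr.1, hr.2.trans hρ.2⟩, by rwa [Finset.insert_erase he] at h⟩

/-- `e` is a face of the unit grid cube containing `x` whose lower corner is the integral part of
`x`. -/
def GridCube.IsFaceAt (x : Fin n → ℝ) (e : GridCube n) : Prop :=
  ∀ i, e.2 i = ⌊x i⌋ ∨ i ∈ e.1 ∧ e.2 i = ⌊x i⌋ + 1

namespace GridCube

variable {i : Fin n}

theorem IsFaceAt.lowerFace (h : e.IsFaceAt x) (i : Fin n) : (e.lowerFace i).IsFaceAt x :=
  fun j => (h j).imp_right fun hj => ⟨Finset.mem_insert_of_mem hj.1, hj.2⟩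

theorem IsFaceAt.upperFace (h : e.IsFaceAt x) (hi : i ∉ e.1) : (e.upperFace i).IsFaceAt x := by
  intro j
  rcases eq_or_ne j i with rfl | hj
  · simp [GridCube.upperFace, (h j).resolve_right fun hj => hi hj.1]
  · simpa [GridCube.upperFace, hj] using h j

theorem IsFaceAt.dist_center_le (h : e.IsFaceAt x) : dist e.center x ≤ 1 := by
  refine (dist_pi_le_iff zero_le_one).2 fun i => abs_le.2 ?_
  have hfloor := Int.floor_le (x i)
  have hfloor' := Int.lt_floor_add_one (x i)
  unfold center
  rcases h i with hi | ⟨hi, hi'⟩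
  · split_ifs <;> rw [hi] <;> constructor <;> linarith
  · rw [if_pos hi, hi']
    push_cast
    constructor <;> linarith

theorem mem_nhd_floor (hρ : 0 < ρ) (x : Fin n → ℝ) : x ∈ nhd ρ (∅, fun i => ⌊x i⌋) := by
  refine mem_nhd_iff.2 fun i => ?_
  have hfloor := Int.floor_le (x i)
  have hfloor' := Int.lt_floor_add_one (x i)
  simp only [center, Finset.notMem_empty, if_false, abs_lt]
  constructor <;> linarith

theorem finite_setOf_isFaceAt (hC : Bornology.IsBounded C) :
    {e : GridCube n | ∃ x ∈ C, e.IsFaceAt x}.Finite := by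
  obtain ⟨R, hR⟩ := hC.subset_closedBall 0
  refine (finite_univ.prod (Finite.pi fun _ => finite_Icc ⌊-R⌋ (⌊R⌋ + 1))).subset ?_
  rintro e ⟨x, hx, h⟩
  refine ⟨trivial, fun i _ => ?_⟩
  have hxi : |x i| ≤ R := (norm_le_pi_norm x i).trans (mem_closedBall_zero_iff.1 (hR hx))
  have hlower := Int.floor_le_floor (abs_le.1 hxi).1
  have hupper := Int.floor_le_floor (abs_le.1 hxi).2
  change ⌊-R⌋ ≤ e.2 i ∧ e.2 i ≤ ⌊R⌋ + 1
  rcases h i with hi | ⟨-, hi⟩ <;> omega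

end GridCube

theorem canExtendFrom_of_closedBall_subset (hC : Bornology.IsBounded C)
    (hΩ : ∀ x ∈ C, closedBall x 2 ⊆ Ω) : CanExtendFrom Ω C := by
  have hfin := finite_setOf_isFaceAt hC
  obtain ⟨ρ, ⟨hρ, -⟩, h⟩ := exists_canExtendFrom_unionNhd (Ω := Ω) hfin.toFinset
    (fun e he => by
      obtain ⟨x, hx, h⟩ := hfin.mem_toFinset.1 he
      exact (closedBall_subset_closedBall' (by linarith [h.dist_center_le])).trans (hΩ x hx))
    (fun e he i hi => by
      obtain ⟨x, hx, h⟩ := hfin.mem_toFinset.1 he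
      exact ⟨hfin.mem_toFinset.2 ⟨x, hx, h.lowerFace i⟩,
        hfin.mem_toFinset.2 ⟨x, hx, h.upperFace hi⟩⟩)
  exact h.mono fun x hx => mem_unionNhd
    (hfin.mem_toFinset.2 ⟨x, hx, fun i => Or.inl rfl⟩) (mem_nhd_floor hρ x)

end Grid

section OpenEmbeddingOn

variable {X Y : Type*} [TopologicalSpace X] [TopologicalSpace Y] {f : X → Y} {U V : Set X}

theorem isOpen_image_of_isOpenEmbedding_domRestrict (hf : IsOpenEmbedding (U.domRestrict f))
    (hV : IsOpen V) (hVU : V ⊆ U) : IsOpen (f '' V) := by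
  have := hf.isOpenMap _ (hV.preimage continuous_subtype_val)
  rwa [image_domRestrict, inter_eq_self_of_subset_left hVU] at this

theorem isOpenEmbedding_domRestrict_mono (hf : IsOpenEmbedding (U.domRestrict f)) (hV : IsOpen V)
    (hVU : V ⊆ U) : IsOpenEmbedding (V.domRestrict f) :=
  hf.comp (IsOpenEmbedding.id.restrict hVU hV)

theorem isOpenEmbedding_domRestrict_union (hU : IsOpen U) (hV : IsOpen V)
    (hfU : IsOpenEmbedding (U.domRestrict f)) (hfV : IsOpenEmbedding (V.domRestrict f))
    (hf : InjOn f (U ∪ V)) : IsOpenEmbedding ((U ∪ V).domRestrict f) := by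
  refine .of_continuous_injective_isOpenMap (continuousOn_iff_continuous_domRestrict.1 ?_)
    (injOn_iff_injective.1 hf) ?_
  · exact (continuousOn_iff_continuous_domRestrict.2 hfU.continuous).union_of_isOpen
      (continuousOn_iff_continuous_domRestrict.2 hfV.continuous) hU hV
  · rintro _ ⟨O, hO, rfl⟩
    rw [image_domRestrict, inter_union_distrib_left, image_union]
    exact (isOpen_image_of_isOpenEmbedding_domRestrict hfU (hO.inter hU) inter_subset_right).union
      (isOpen_image_of_isOpenEmbedding_domRestrict hfV (hO.inter hV) inter_subset_right)

end OpenEmbeddingOn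

section Extension

theorem nearInverseOn_invFunOn {E : Type*} [NormedAddCommGroup E] [NormedSpace ℝ E] [ProperSpace E]
    {f : E → E} {U Ω : Set E} {ε r : ℝ} (hf : IsOpenEmbedding (U.domRestrict f))
    (hε : 0 ≤ ε) (hr : 2 * ε < r) (hd : ∀ x ∈ U, dist (f x) x ≤ ε)
    (hΩ : ∀ x ∈ Ω, closedBall x r ⊆ U) : NearInverseOn ε f (Function.invFunOn f U) Ω := by
  have hcont : ContinuousOn f U := continuousOn_iff_continuous_domRestrict.2 hf.continuous
  have hinv : LeftInvOn (Function.invFunOn f U) f U :=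
    (injOn_iff_injective.2 hf.injective).leftInvOn_invFunOn
  have hΩU : Ω ⊆ U := fun x hx => hΩ x hx (mem_closedBall_self (by linarith))
  have himage : Ω ⊆ f '' U := fun x hx => by
    have hball : ball x r ⊆ U := ball_subset_closedBall.trans (hΩ x hx)
    exact image_mono hball <| mem_image_ball_of_dist_le hε hr (hcont.mono (hΩ x hx))
      (isOpen_image_of_isOpenEmbedding_domRestrict hf isOpen_ball hball)
      fun z hz => hd z (hΩ x hx hz)
  exact
    { continuousOn_left := hcont.mono hΩU
      continuousOn_right := (hf.isOpenMap.continuousOn_image_of_leftInvOn hinv).mono himage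
      dist_left_le := fun x hx => hd x (hΩU hx)
      dist_right_le := fun x hx => by
        obtain ⟨z, hz, rfl⟩ := himage hx
        rw [hinv hz, dist_comm]
        exact hd z hz
      right_left := fun x hx _ => hinv (hΩU hx)
      left_right := fun x hx _ => Function.invFunOn_eq (himage hx) }

variable {n : ℕ} {Ω C U : Set (Fin n → ℝ)} {s η : ℝ}

theorem CanExtendFrom.of_homeomorph {K L : NNReal} (A : (Fin n → ℝ) ≃ₜ (Fin n → ℝ))
    (hA : LipschitzWith K A) (hA' : LipschitzWith L A.symm)
    (h : CanExtendFrom (A.symm ⁻¹' Ω) (A.symm ⁻¹' C)) : CanExtendFrom Ω C := by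
  intro η hη
  have hK : 0 < (K : ℝ) + 1 := by positivity
  have hL : 0 < (L : ℝ) + 1 := by positivity
  obtain ⟨ε, hε, h⟩ := h (η / (L + 1)) (by positivity)
  refine ⟨ε / (K + 1), by positivity, fun f g hfg => ?_⟩
  have hKε : K * (ε / (K + 1)) ≤ ε := by
    rw [mul_div_assoc', div_le_iff₀ hK]
    nlinarith
  obtain ⟨F, hF, hFf⟩ := h _ _ ((hfg.conj A hA).mono subset_rfl hKε)
  refine ⟨(A.trans F).trans A.symm, fun x => ?_, fun x hx => ?_⟩
  · calc dist (A.symm (F (A x))) x = dist (A.symm (F (A x))) (A.symm (A x)) := by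
          rw [A.symm_apply_apply]
      _ ≤ L * (η / (L + 1)) :=
        (hA'.dist_le_mul _ _).trans (mul_le_mul_of_nonneg_left (hF _) L.coe_nonneg)
      _ ≤ η := by
        rw [mul_div_assoc', div_le_iff₀ hL]
        nlinarith
  · have := @hFf (A x) (by simpa using hx)
    simp [this]

theorem canExtendFrom_of_closedBall_subset_of_pos (hC : Bornology.IsBounded C) (hs : 0 < s)
    (hΩ : ∀ x ∈ C, closedBall x s ⊆ Ω) : CanExtendFrom Ω C := by
  have hl : 2 / s ≠ 0 := by positivity
  let A : (Fin n → ℝ) ≃ₜ (Fin n → ℝ) := Homeomorph.smulOfNeZero (2 / s) hl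
  have hA : LipschitzWith ‖2 / s‖₊ A := lipschitzWith_smul (2 / s)
  have hA' : LipschitzWith ‖(2 / s)⁻¹‖₊ A.symm := lipschitzWith_smul (2 / s)⁻¹
  refine .of_homeomorph A hA hA' (canExtendFrom_of_closedBall_subset ?_ fun x hx y hy => ?_)
  · rw [← A.image_eq_preimage_symm]
    exact hA.isBounded_image hC
  · refine hΩ _ hx (mem_closedBall.2 ((hA'.dist_le_mul y x).trans ?_))
    rw [coe_nnnorm, inv_div, Real.norm_of_nonneg (by positivity)]
    nlinarith [mem_closedBall.1 hy]

theorem exists_homeomorph_eqOn_of_isCompact (hC : IsCompact C) (hU : IsOpen U) (hCU : C ⊆ U)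
    (hη : 0 < η) :
    ∃ ε > 0, ∀ f, IsOpenEmbedding (U.domRestrict f) → (∀ x ∈ U, dist (f x) x ≤ ε) →
      ∃ F : (Fin n → ℝ) ≃ₜ (Fin n → ℝ), (∀ x, dist (F x) x ≤ η) ∧ EqOn F f C := by
  obtain ⟨r, hr, hrU⟩ := hC.exists_thickening_subset_open hU hCU
  have hΩU (x) (hx : x ∈ thickening (r / 2) C) : closedBall x (r / 4) ⊆ U := fun y hy => by
    obtain ⟨z, hz, hxz⟩ := mem_thickening_iff.1 hx
    refine hrU (mem_thickening_iff.2 ⟨z, hz, (dist_triangle y x z).trans_lt ?_⟩)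
    linarith [mem_closedBall.1 hy]
  have hCΩ (x) (hx : x ∈ C) : closedBall x (r / 4) ⊆ thickening (r / 2) C := fun y hy =>
    mem_thickening_iff.2 ⟨x, hx, by linarith [mem_closedBall.1 hy]⟩
  obtain ⟨ε, hε, h⟩ :=
    canExtendFrom_of_closedBall_subset_of_pos hC.isBounded (by positivity) hCΩ η hη
  have hεr : 2 * min ε (r / 16) < r / 4 := by linarith [min_le_right ε (r / 16)]
  exact ⟨min ε (r / 16), by positivity, fun f hf hd => h f (Function.invFunOn f U) <|
    (nearInverseOn_invFunOn hf (by positivity) hεr hd hΩU).mono subset_rfl (min_le_left _ _)⟩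

end Extension

section Compactness

variable {X Y M : Type*} [PseudoMetricSpace X] [PseudoMetricSpace Y] [TopologicalSpace M]
  [T2Space M] {a : X → M} {b : Y → M}

theorem exists_forall_mem_of_dist_lt (ha : Continuous a) (hb : Continuous b) {K : Set X}
    {L : Set Y} (hK : IsCompact K) (hL : IsCompact L) {O : Set M} (hO : IsOpen O)
    (hKO : a '' K ⊆ O) :
    ∃ σ > 0, ∀ z ∈ K, ∀ x ∈ L, ∀ z' x', dist z' z < σ → dist x' x < σ → a z' = b x' → b x ∈ O := by
  have hopen : IsOpen {q : X × Y | a q.1 ≠ b q.2} :=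
    (isClosed_eq (by fun_prop) (by fun_prop)).isOpen_compl
  have hcompact : IsCompact (K ×ˢ L \ {q | b q.2 ∈ O}) :=
    (hK.prod hL).diff (hO.preimage (by fun_prop : Continuous fun q : X × Y => b q.2))
  obtain ⟨σ, hσ, h⟩ := hcompact.exists_thickening_subset_open hopen
    fun q hq (hab : a q.1 = b q.2) =>
      hq.2 (hab ▸ hKO (mem_image_of_mem a hq.1.1) : b q.2 ∈ O)
  refine ⟨σ, hσ, fun z hz x hx z' x' hzz' hxx' hab => ?_⟩
  by_contra hxO
  have hmem : (z', x') ∈ thickening σ (K ×ˢ L \ {q | b q.2 ∈ O}) :=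
    mem_thickening_iff.2 ⟨(z, x), ⟨⟨hz, hx⟩, hxO⟩, max_lt hzz' hxx'⟩
  exact h hmem hab

theorem exists_forall_dist_lt_of_dist_lt (ha : Continuous a) (hb : Continuous b)
    (hbi : Function.Injective b) {K : Set X} {L : Set Y} (hK : IsCompact K) (hL : IsCompact L)
    {τ : ℝ} (hτ : 0 < τ) :
    ∃ σ > 0, ∀ z ∈ K, ∀ x ∈ L, ∀ y ∈ L, ∀ w, dist w z < σ → a z = b x → a w = b y →
      dist y x < τ := by
  have hopen : IsOpen {q : X × Y × Y | a q.1 ≠ b q.2.2} :=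
    (isClosed_eq (by fun_prop) (by fun_prop)).isOpen_compl
  have hclosed : IsClosed ({q : X × Y × Y | a q.1 = b q.2.1} ∩ {q | τ ≤ dist q.2.2 q.2.1}) :=
    (isClosed_eq (by fun_prop) (by fun_prop)).inter (isClosed_le (by fun_prop) (by fun_prop))
  obtain ⟨σ, hσ, h⟩ := ((hK.prod (hL.prod hL)).inter_right hclosed).exists_thickening_subset_open
    hopen fun q ⟨_, hx, hτq⟩ hy => by
      rw [mem_ofPred_eq, hbi (hy.symm.trans hx), dist_self] at hτq
      exact hτq.not_gt hτ
  refine ⟨σ, hσ, fun z hz x hx y hy w hwz hzx hwy => ?_⟩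
  by_contra hxy
  refine h (?_ : (w, x, y) ∈ _) hwy
  refine mem_thickening_iff.2 ⟨(z, x, y), ⟨⟨hz, hx, hy⟩, hzx, not_lt.1 hxy⟩, ?_⟩
  simpa [Prod.dist_eq, hσ] using hwz

end Compactness

section Union

variable {X M N : Type*} [TopologicalSpace X] [TopologicalSpace M] [TopologicalSpace N]

theorem exists_isOpenEmbedding_domRestrict_union {φ : M → N} {h : X → M} {k : X → N} {W : Set M}
    {B : Set X} (hW : IsOpen W) (hB : IsOpen B) (hφ : IsOpenEmbedding (W.domRestrict φ))
    (hh : IsOpenEmbedding h) (hk : IsOpenEmbedding k)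
    (hφk : ∀ p ∈ W, ∀ x ∈ B, φ p = k x ↔ p = h x) :
    ∃ ψ : M → N, IsOpenEmbedding ((W ∪ h '' B).domRestrict ψ) ∧ EqOn ψ φ W ∧
      ∀ x ∈ B, ψ (h x) = k x := by
  classical
  let ψ := W.piecewise φ (Function.extend h k φ)
  have hψφ : EqOn ψ φ W := piecewise_eqOn W _ _
  have hψk (x) (hx : x ∈ B) : ψ (h x) = k x := by
    by_cases hp : h x ∈ W
    · rw [hψφ hp, hφk _ hp x hx]
    · exact (piecewise_eq_of_notMem W _ _ hp).trans (hh.injective.extend_apply _ _ _)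
  refine ⟨ψ, isOpenEmbedding_domRestrict_union hW (hh.isOpenMap _ hB) ?_ ?_ ?_, hψφ, hψk⟩
  · rwa [domRestrict_eq_domRestrict_iff.2 hψφ]
  · let e := hh.isEmbedding.homeomorphImage B
    have hψe : (h '' B).domRestrict ψ = B.domRestrict k ∘ e.symm :=
      (e.toEquiv.eq_comp_symm _ _).2 (funext fun x => hψk x x.2)
    rw [hψe]
    exact (hk.comp hB.isOpenEmbedding_subtypeVal).comp e.symm.isOpenEmbedding
  · rintro p (hp | ⟨x, hx, rfl⟩) q (hq | ⟨y, hy, rfl⟩) hpq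
    · exact injOn_iff_injective.2 hφ.injective hp hq (by rwa [hψφ hp, hψφ hq] at hpq)
    · exact (hφk p hp y hy).1 (by rwa [hψφ hp, hψk y hy] at hpq)
    · exact ((hφk q hq x hx).1 (by rw [← hψφ hq, ← hψk x hx, hpq])).symm
    · rw [hψk x hx, hψk y hy] at hpq
      rw [hk.injective hpq]

end Union

section Transfer

variable {n : ℕ} {κ : Type v} {M N : Type u} {h : κ → (Fin n → ℝ) → M} {g : κ → (Fin n → ℝ) → N}
  {s : Finset κ} {i j : κ} {r r₁ r₂ δ η σ τ : ℝ} {φ : M → N} {F : (Fin n → ℝ) ≃ₜ (Fin n → ℝ)}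

/-- Coincidences `h i x = h j y` between points of the balls of radius `4` become coincidences of
`g` after moving `x` and `y` by at most `δ`. -/
def CoincidencesNear (δ : ℝ) (h : κ → (Fin n → ℝ) → M) (g : κ → (Fin n → ℝ) → N) : Prop :=
  ∀ i j, ∀ x ∈ closedBall (0 : Fin n → ℝ) 4, ∀ y ∈ closedBall (0 : Fin n → ℝ) 4, h i x = h j y →
    ∃ x' y', dist x' x ≤ δ ∧ dist y' y ≤ δ ∧ g i x' = g j y'

theorem CoincidencesNear.mono {δ' : ℝ} (hc : CoincidencesNear δ h g) (hδ : δ ≤ δ') :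
    CoincidencesNear δ' h g := fun i j x hx y hy hxy => by
  obtain ⟨x', y', hx', hy', heq⟩ := hc i j x hx y hy hxy
  exact ⟨x', y', hx'.trans hδ, hy'.trans hδ, heq⟩

/-- The union of the images of the balls of radius `r` under the charts `h i`, `i ∈ s`. -/
def patch (h : κ → (Fin n → ℝ) → M) (s : Finset κ) (r : ℝ) : Set M := ⋃ i ∈ s, h i '' ball 0 r

theorem mem_patch {p : M} : p ∈ patch h s r ↔ ∃ i ∈ s, ∃ x ∈ ball 0 r, h i x = p := by
  simp only [patch, mem_iUnion, mem_image, exists_prop]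

theorem patch_mono (hr : r ≤ r₁) : patch h s r ⊆ patch h s r₁ :=
  iUnion₂_mono fun _ _ => image_mono (ball_subset_ball hr)

theorem patch_insert [DecidableEq κ] :
    patch h (insert j s) r = patch h s r ∪ h j '' ball 0 r := by
  rw [patch, Finset.set_biUnion_insert, union_comm, patch]

/-- Moduli for the overlaps of the chart `h j` with the other charts: `σ`-small perturbations of a
coincidence between points of the balls of radius `r` stay in the charts of radius `r₁`, and the
transition maps into the other charts have modulus of continuity `(σ, τ / 4)`. -/
structure IsOverlapModulus (h : κ → (Fin n → ℝ) → M) (j : κ) (r r₁ τ σ : ℝ) : Prop where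
  pos : 0 < σ
  le : σ ≤ τ
  mem_image : ∀ i, ∀ z ∈ closedBall 0 r, ∀ x ∈ closedBall 0 r, ∀ z' x',
    dist z' z < σ → dist x' x < σ → h i z' = h j x' → h j x ∈ h i '' ball 0 r₁
  dist_lt : ∀ i, ∀ z ∈ closedBall 0 5, ∀ x ∈ closedBall 0 5, ∀ y ∈ closedBall 0 5, ∀ w,
    dist w z < σ → h j z = h i x → h j w = h i y → dist y x < τ / 4

/-- `φ` is an open embedding of `W` which in each pair of charts `h i`, `g i` moves points by at
most `η`. -/
structure IsNearEmbedding [TopologicalSpace M] [TopologicalSpace N] (h : κ → (Fin n → ℝ) → M)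
    (g : κ → (Fin n → ℝ) → N) (W : Set M) (η : ℝ) (φ : M → N) : Prop where
  isOpenEmbedding : IsOpenEmbedding (W.domRestrict φ)
  exists_near : ∀ i, ∀ x ∈ ball 0 3, h i x ∈ W → ∃ x', g i x' = φ (h i x) ∧ dist x' x ≤ η

theorem IsOverlapModulus.exists_near [TopologicalSpace N] [T2Space N]
    (hm : IsOverlapModulus h j r r₁ τ σ) (hτ : τ ≤ 1)
    (hg : ∀ i, IsOpenEmbedding (g i)) (hhg : CoincidencesNear (σ / 8) h g)
    (hgh : CoincidencesNear (σ / 8) g h) {x z u : Fin n → ℝ} (hx : x ∈ ball 0 3)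
    (hz : z ∈ ball 0 2) (hxz : h i x = h j z) (hu : dist u z ≤ σ / 4) :
    ∃ x', g i x' = g j u ∧ dist x' x ≤ τ := by
  rw [mem_ball] at hx hz
  have hσ := hm.pos
  have hστ := hm.le
  obtain ⟨x₁, z₁, hx₁, hz₁, hxz₁⟩ := hhg i j x (by rw [mem_closedBall]; linarith) z
    (by rw [mem_closedBall]; linarith) hxz
  -- `g j` maps the ball around `z₁` into `g i '' ball x τ`, since it is connected, meets this set
  -- and avoids the shell between the radii `τ / 2` and `τ`.
  by_contra! hcon
  have hclosed : IsClosed (g i '' closedBall x (τ / 2)) :=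
    ((isCompact_closedBall x (τ / 2)).image (hg i).continuous).isClosed
  obtain ⟨w, hw, ⟨y, hy, hyw⟩, hw_shell⟩ := (convex_ball z₁ (σ / 2)).isPreconnected
    (g j ⁻¹' (g i '' ball x τ)) (g j ⁻¹' (g i '' closedBall x (τ / 2))ᶜ)
    (((hg i).isOpenMap _ isOpen_ball).preimage (hg j).continuous)
    (hclosed.isOpen_compl.preimage (hg j).continuous)
    (fun w _ => (em (g j w ∈ g i '' closedBall x (τ / 2))).imp
      (fun hw => image_mono (closedBall_subset_ball (by linarith)) hw) id)
    ⟨z₁, mem_ball_self (by linarith), x₁, by rw [mem_ball]; linarith, hxz₁⟩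
    ⟨u, by rw [mem_ball]; linarith [dist_triangle_right u z₁ z], fun ⟨x', hx', hx'u⟩ => by
      linarith [hcon x' hx'u, mem_closedBall.1 hx']⟩
  refine hw_shell ⟨y, ?_, hyw⟩
  rw [mem_ball] at hw hy
  have hwz : dist w z < σ / 2 + σ / 8 := by linarith [dist_triangle w z₁ z]
  obtain ⟨y₂, w₂, hy₂, hw₂, hyw₂⟩ := hgh i j y
    (by rw [mem_closedBall]; linarith [dist_triangle y x 0]) w
    (by rw [mem_closedBall]; linarith [dist_triangle w z 0]) hyw
  have hyx := hm.dist_lt i z (by rw [mem_closedBall]; linarith) x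
    (by rw [mem_closedBall]; linarith) y₂
    (by rw [mem_closedBall]; linarith [dist_triangle y₂ y 0, dist_triangle y x 0]) w₂
    (by linarith [dist_triangle w₂ w z]) hxz.symm hyw₂.symm
  rw [mem_closedBall]
  linarith [dist_triangle_left y x y₂]

variable [TopologicalSpace M]

theorem isOpen_patch (hh : ∀ i, IsOpenEmbedding (h i)) : IsOpen (patch h s r) :=
  isOpen_biUnion fun i _ => (hh i).isOpenMap _ isOpen_ball

theorem exists_isOverlapModulus [Finite κ] [T2Space M] (hh : ∀ i, IsOpenEmbedding (h i)) (j : κ)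
    (hr : r < r₁) (hτ : 0 < τ) : ∃ σ, IsOverlapModulus h j r r₁ τ σ := by
  have hball : IsCompact (closedBall (0 : Fin n → ℝ) r) := isCompact_closedBall 0 r
  have hball' : IsCompact (closedBall (0 : Fin n → ℝ) 5) := isCompact_closedBall 0 5
  choose σ₁ hσ₁ hmem using fun i => exists_forall_mem_of_dist_lt (hh i).continuous
    (hh j).continuous hball hball ((hh i).isOpenMap _ (isOpen_ball (x := 0) (ε := r₁)))
    (image_mono (closedBall_subset_ball hr))
  choose σ₂ hσ₂ hdist using fun i => exists_forall_dist_lt_of_dist_lt (hh j).continuous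
    (hh i).continuous (hh i).injective hball' hball' (show 0 < τ / 4 by positivity)
  obtain ⟨σ, hσ, hσle⟩ : ∃ σ > 0, ∀ i, σ ≤ min τ (min (σ₁ i) (σ₂ i)) := by
    have hpos (i) : 0 < min τ (min (σ₁ i) (σ₂ i)) := lt_min hτ (lt_min (hσ₁ i) (hσ₂ i))
    obtain ⟨σ, hσ⟩ := (Filter.eventually_all.2 fun i => Ioc_mem_nhdsGT (hpos i)).exists
    exact ⟨σ, (hσ j).1, fun i => (hσ i).2⟩
  simp only [le_min_iff] at hσle
  exact ⟨σ, hσ, (hσle j).1,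
    fun i z hz x hx z' x' hz' hx' => hmem i z hz x hx z' x' (hz'.trans_le (hσle i).2.1)
      (hx'.trans_le (hσle i).2.1),
    fun i z hz x hx y hy w hw => hdist i z hz x hx y hy w (hw.trans_le (hσle i).2.2)⟩

variable [TopologicalSpace N]

theorem IsNearEmbedding.mono {W : Set M} {η' : ℝ} (hφ : IsNearEmbedding h g W η φ) (hη : η ≤ η') :
    IsNearEmbedding h g W η' φ :=
  ⟨hφ.isOpenEmbedding, fun i x hx hp =>
    (hφ.exists_near i x hx hp).imp fun _ hx' => hx'.imp_right fun h => h.trans hη⟩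

theorem IsNearEmbedding.exists_lift {W : Set M} (hφ : IsNearEmbedding h g W η φ) (hW : IsOpen W)
    (hh : ∀ i, IsOpenEmbedding (h i)) (hg : ∀ i, IsOpenEmbedding (g i)) (j : κ) :
    ∃ f : (Fin n → ℝ) → Fin n → ℝ,
      IsOpenEmbedding ((h j ⁻¹' W ∩ ball 0 3).domRestrict f) ∧
      ∀ x ∈ h j ⁻¹' W ∩ ball 0 3, g j (f x) = φ (h j x) ∧ dist (f x) x ≤ η := by
  classical
  have hlift (x : Fin n → ℝ) : ∃ x', x ∈ h j ⁻¹' W ∩ ball 0 3 →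
      g j x' = φ (h j x) ∧ dist x' x ≤ η := by
    by_cases hx : x ∈ h j ⁻¹' W ∩ ball 0 3
    · exact (hφ.exists_near j x hx.2 hx.1).imp fun _ hx' _ => hx'
    · exact ⟨x, fun hx' => absurd hx' hx⟩
  choose f hf using hlift
  refine ⟨f, .of_comp _ (hg j) ?_, hf⟩
  have hopen : IsOpen (h j ⁻¹' W ∩ ball 0 3) :=
    (hW.preimage (hh j).continuous).inter isOpen_ball
  have hcomp := hφ.isOpenEmbedding.comp
    ((hh j).restrict (inter_subset_left : _ ⊆ h j ⁻¹' W) hopen)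
  rwa [show g j ∘ domRestrict _ f = _ from funext fun x => (hf x x.2).1]

theorem IsNearEmbedding.map_eq_iff (hφ : IsNearEmbedding h g (patch h s r) (σ / 4) φ)
    (hm : IsOverlapModulus h j r₂ r₁ τ σ) (hτ : τ ≤ 1) (hr₂ : r₂ < r₁) (hr₁ : r₁ < r) (hr : r < 2)
    (hgh : CoincidencesNear (σ / 8) g h) (hF : ∀ x, dist (F x) x ≤ σ / 4)
    (hFφ : ∀ x ∈ ball 0 r, h j x ∈ patch h s r₁ → g j (F x) = φ (h j x)) {p : M}
    (hp : p ∈ patch h s r₂) {x : Fin n → ℝ} (hx : x ∈ ball 0 r₂) :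
    φ p = g j (F x) ↔ p = h j x := by
  have hσ := hm.pos
  have hστ := hm.le
  have hsub : ball (0 : Fin n → ℝ) r₂ ⊆ ball 0 r := ball_subset_ball (by linarith)
  refine ⟨fun hpx => ?_, ?_⟩
  · obtain ⟨i, hi, z, hz, rfl⟩ := mem_patch.1 hp
    obtain ⟨z', hz'φ, hz'⟩ := hφ.exists_near i z (ball_subset_ball (by linarith) hz)
      (patch_mono (by linarith) hp)
    have hz0 := mem_ball.1 hz
    have hx0 := mem_ball.1 hx
    obtain ⟨z₂, x₂, hz₂, hx₂, hzx₂⟩ := hgh i j z'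
      (by rw [mem_closedBall]; linarith [dist_triangle z' z 0]) (F x)
      (by rw [mem_closedBall]; linarith [dist_triangle (F x) x 0, hF x]) (hz'φ.trans hpx)
    obtain ⟨y, hy, hyx⟩ := hm.mem_image i z (ball_subset_closedBall hz) x
      (ball_subset_closedBall hx) z₂ x₂ (by linarith [dist_triangle z₂ z' z])
      (by linarith [dist_triangle x₂ (F x) x, hF x]) hzx₂
    have hxr₁ : h j x ∈ patch h s r₁ := mem_patch.2 ⟨i, hi, y, hy, hyx⟩
    rw [hFφ x (hsub hx) hxr₁] at hpx
    exact injOn_iff_injective.2 hφ.isOpenEmbedding.injective (patch_mono (by linarith) hp)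
      (patch_mono hr₁.le hxr₁) hpx
  · rintro rfl
    exact (hFφ x (hsub hx) (patch_mono hr₂.le hp)).symm

theorem IsNearEmbedding.exists_insert [DecidableEq κ] [T2Space N]
    (hφ : IsNearEmbedding h g (patch h s r) (σ / 4) φ) (hh : ∀ i, IsOpenEmbedding (h i))
    (hg : ∀ i, IsOpenEmbedding (g i))
    (hm : IsOverlapModulus h j r₂ r₁ τ σ) (hτ : τ ≤ 1) (hr₂ : r₂ < r₁) (hr₁ : r₁ < r) (hr : r < 2)
    (hhg : CoincidencesNear (σ / 8) h g)
    (hgh : CoincidencesNear (σ / 8) g h) (hF : ∀ x, dist (F x) x ≤ σ / 4)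
    (hFφ : ∀ x ∈ ball 0 r, h j x ∈ patch h s r₁ → g j (F x) = φ (h j x)) :
    ∃ ψ, IsNearEmbedding h g (patch h (insert j s) r₂) τ ψ := by
  have hsub : patch h s r₂ ⊆ patch h s r := patch_mono (by linarith)
  obtain ⟨ψ, hψ, hψφ, hψF⟩ := exists_isOpenEmbedding_domRestrict_union (isOpen_patch hh)
    (isOpen_ball (x := 0) (ε := r₂))
    (isOpenEmbedding_domRestrict_mono hφ.isOpenEmbedding (isOpen_patch hh) hsub) (hh j)
    ((hg j).comp F.isOpenEmbedding) fun p hp x hx =>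
      hφ.map_eq_iff hm hτ hr₂ hr₁ hr hgh hF hFφ hp hx
  rw [patch_insert]
  refine ⟨ψ, hψ, fun i x hx hp => ?_⟩
  rcases hp with hp | ⟨z, hz, hzx⟩
  · obtain ⟨x', hx', hdist⟩ := hφ.exists_near i x hx (hsub hp)
    exact ⟨x', hx'.trans (hψφ hp).symm, by linarith [hm.pos, hm.le]⟩
  · rw [← hzx, hψF z hz]
    exact hm.exists_near hτ hg hhg hgh hx (ball_subset_ball (by linarith) hz) hzx.symm (hF z)

/-- Every family of charts of a Hausdorff space with nearly the same coincidences as `h` has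
near embeddings of the patch of radius `r`, as close to the identity as desired. -/
def EmbedsNearby (h : κ → (Fin n → ℝ) → M) (s : Finset κ) (r : ℝ) : Prop :=
  ∀ η > 0, ∃ δ > 0, ∀ (N : Type u) [TopologicalSpace N] [T2Space N] (g : κ → (Fin n → ℝ) → N),
    (∀ i, IsOpenEmbedding (g i)) → CoincidencesNear δ h g → CoincidencesNear δ g h →
      ∃ φ, IsNearEmbedding h g (patch h s r) η φ

theorem embedsNearby_empty [Nonempty κ] : EmbedsNearby h ∅ r := fun _ _ =>
  ⟨1, one_pos, fun N _ _ g _ _ _ => by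
    have hempty : patch h ∅ r = ∅ := by simp [patch]
    rw [hempty]
    exact ⟨fun _ => g (Classical.arbitrary κ) 0, .of_isEmpty _, fun _ _ _ hx => hx.elim⟩⟩

theorem exists_homeomorph_of_isNearEmbedding [T2Space M] (hh : ∀ i, IsOpenEmbedding (h i)) (j : κ)
    (hr₁ : r₁ < r) (hr : r < 3) (hη : 0 < η) :
    ∃ ε > 0, ∀ (N : Type u) [TopologicalSpace N] (g : κ → (Fin n → ℝ) → N),
      (∀ i, IsOpenEmbedding (g i)) → ∀ φ, IsNearEmbedding h g (patch h s r) ε φ →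
        ∃ F : (Fin n → ℝ) ≃ₜ (Fin n → ℝ), (∀ x, dist (F x) x ≤ η) ∧
          ∀ x ∈ ball 0 r, h j x ∈ patch h s r₁ → g j (F x) = φ (h j x) := by
  let K := ⋃ i ∈ s, h i '' closedBall 0 r₁
  have hK : IsClosed K := s.finite_toSet.isClosed_biUnion fun i _ =>
    ((isCompact_closedBall _ _).image (hh i).continuous).isClosed
  have hpatchK : patch h s r₁ ⊆ K := iUnion₂_mono fun _ _ => image_mono ball_subset_closedBall
  have hKpatch : K ⊆ patch h s r := iUnion₂_mono fun _ _ => image_mono (closedBall_subset_ball hr₁)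
  obtain ⟨ε, hε, hF⟩ := exists_homeomorph_eqOn_of_isCompact
    ((isCompact_closedBall (0 : Fin n → ℝ) r).inter_right (hK.preimage (hh j).continuous))
    (((isOpen_patch hh).preimage (hh j).continuous).inter (isOpen_ball (x := 0) (ε := 3)))
    (fun x hx => ⟨hKpatch hx.2, closedBall_subset_ball hr hx.1⟩) hη
  refine ⟨ε, hε, fun N _ g hg φ hφ => ?_⟩
  obtain ⟨f, hf, hfφ⟩ := hφ.exists_lift (isOpen_patch hh) hh hg j
  obtain ⟨F, hFdist, hFf⟩ := hF f hf fun x hx => (hfφ x hx).2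
  refine ⟨F, hFdist, fun x hx hxr₁ => ?_⟩
  rw [hFf ⟨ball_subset_closedBall hx, hpatchK hxr₁⟩]
  exact (hfφ x ⟨patch_mono hr₁.le hxr₁, ball_subset_ball hr.le hx⟩).1

theorem EmbedsNearby.insert [DecidableEq κ] [Finite κ] [T2Space M] (hs : EmbedsNearby h s r)
    (hh : ∀ i, IsOpenEmbedding (h i)) (j : κ) (hr₂ : r₂ < r) (hr : r < 2) :
    EmbedsNearby h (insert j s) r₂ := fun η hη => by
  obtain ⟨r₁, hr₂₁, hr₁⟩ := exists_between hr₂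
  obtain ⟨σ, hm⟩ := exists_isOverlapModulus hh j hr₂₁ (lt_min hη one_pos)
  have hσ := hm.pos
  obtain ⟨ε, hε, hF⟩ := exists_homeomorph_of_isNearEmbedding (s := s) hh j hr₁
    (by linarith : r < 3) (by positivity : 0 < σ / 4)
  obtain ⟨δ, hδ, hφ⟩ := hs (min ε (σ / 4)) (by positivity)
  refine ⟨min δ (σ / 8), by positivity, fun N _ _ g hg hhg hgh => ?_⟩
  obtain ⟨φ, hφ⟩ := hφ N g hg (hhg.mono (min_le_left _ _)) (hgh.mono (min_le_left _ _))
  obtain ⟨F, hFdist, hFφ⟩ := hF N g hg φ (hφ.mono (min_le_left _ _))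
  obtain ⟨ψ, hψ⟩ := (hφ.mono (min_le_right _ _)).exists_insert hh hg hm (min_le_right _ _) hr₂₁ hr₁
    hr (hhg.mono (min_le_right _ _)) (hgh.mono (min_le_right _ _)) hFdist hFφ
  exact ⟨ψ, hψ.mono (min_le_left _ _)⟩

theorem embedsNearby [Nonempty κ] [Finite κ] [T2Space M] (hh : ∀ i, IsOpenEmbedding (h i))
    (s : Finset κ) (hr : r < 2) : EmbedsNearby h s r := by
  classical
  induction s using Finset.induction_on generalizing r with
  | empty => exact embedsNearby_empty
  | insert j s _ ih =>
    obtain ⟨r', hrr', hr'⟩ := exists_between hr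
    exact (ih hr').insert hh j hrr' hr'

end Transfer

section Rigidity

variable {n : ℕ} {κ : Type v} {M N : Type u} [TopologicalSpace M] [TopologicalSpace N]
  {h : κ → (Fin n → ℝ) → M} {g : κ → (Fin n → ℝ) → N}

/-- A family of charts parametrized by all of `ℝⁿ` whose unit balls cover the space. -/
structure IsBallAtlas (h : κ → (Fin n → ℝ) → M) : Prop where
  isOpenEmbedding : ∀ i, IsOpenEmbedding (h i)
  exists_mem_image : ∀ p, ∃ i, p ∈ h i '' closedBall 0 1

theorem IsBallAtlas.patch_univ [Fintype κ] (hh : IsBallAtlas h) {r : ℝ} (hr : 1 < r) :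
    patch h Finset.univ r = univ :=
  eq_univ_of_forall fun p => by
    obtain ⟨i, x, hx, hxp⟩ := hh.exists_mem_image p
    exact mem_patch.2 ⟨i, Finset.mem_univ i, x, closedBall_subset_ball hr hx, hxp⟩

theorem IsNearEmbedding.surjective {φ : M → N} {η : ℝ} (hφ : IsNearEmbedding h g univ η φ)
    (hη : η ≤ 1 / 2) (hh : ∀ i, IsOpenEmbedding (h i)) (hg : IsBallAtlas g) :
    Function.Surjective φ := fun q => by
  obtain ⟨j, y, hy, rfl⟩ := hg.exists_mem_image q
  obtain ⟨f, hf, hfφ⟩ := hφ.exists_lift isOpen_univ hh hg.isOpenEmbedding j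
  rw [preimage_univ, univ_inter] at hf hfφ
  have hball : closedBall y (3 / 2) ⊆ ball 0 3 :=
    closedBall_subset_ball' (by linarith [mem_closedBall.1 hy])
  have hη₀ : 0 ≤ η := dist_nonneg.trans (hfφ y (hball (mem_closedBall_self (by norm_num)))).2
  obtain ⟨x, hx, hxy⟩ := mem_image_ball_of_dist_le hη₀ (by linarith : 2 * η < 3 / 2)
    ((continuousOn_iff_continuous_domRestrict.2 hf.continuous).mono hball)
    (isOpen_image_of_isOpenEmbedding_domRestrict hf isOpen_ball
      (ball_subset_closedBall.trans hball)) fun x hx => (hfφ x (hball hx)).2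
  exact ⟨h j x, by rw [← (hfφ x (hball (ball_subset_closedBall hx))).1, hxy]⟩

/-- Spaces with a ball atlas having nearly the same coincidences as `h` are homeomorphic to `M`. -/
def IsRigid (δ : ℝ) (h : κ → (Fin n → ℝ) → M) : Prop :=
  ∀ (N : Type u) [TopologicalSpace N] [T2Space N] (g : κ → (Fin n → ℝ) → N), IsBallAtlas g →
    CoincidencesNear δ h g → CoincidencesNear δ g h → Nonempty (M ≃ₜ N)

theorem IsRigid.mono {δ δ' : ℝ} (hδ : IsRigid δ h) (hle : δ' ≤ δ) : IsRigid δ' h :=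
  fun N _ _ g hg hhg hgh => hδ N g hg (hhg.mono hle) (hgh.mono hle)

theorem IsBallAtlas.exists_isRigid [Finite κ] [T2Space M] (hh : IsBallAtlas h) :
    ∃ δ > 0, IsRigid δ h := by
  have := Fintype.ofFinite κ
  obtain hκ | hκ := isEmpty_or_nonempty κ
  · have hempty {X : Type u} [TopologicalSpace X] {k : κ → (Fin n → ℝ) → X} (hk : IsBallAtlas k) :
        IsEmpty X := ⟨fun p => isEmptyElim (hk.exists_mem_image p).choose⟩
    refine ⟨1, one_pos, fun N _ _ g hg _ _ => ?_⟩
    have := hempty hh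
    have := hempty hg
    exact ⟨.empty⟩
  · obtain ⟨δ, hδ, hφ⟩ := embedsNearby hh.isOpenEmbedding Finset.univ
      (by norm_num : (3 / 2 : ℝ) < 2) (1 / 2) (by norm_num)
    refine ⟨δ, hδ, fun N _ _ g hg hhg hgh => ?_⟩
    obtain ⟨φ, hφ⟩ := hφ N g hg.isOpenEmbedding hhg hgh
    rw [hh.patch_univ (by norm_num)] at hφ
    have hφopen : IsOpenEmbedding φ :=
      hφ.isOpenEmbedding.comp (Homeomorph.Set.univ M).symm.isOpenEmbedding
    exact ⟨hφopen.isEmbedding.toHomeomorphOfSurjective (hφ.surjective le_rfl hh.isOpenEmbedding hg)⟩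

end Rigidity

section Charts

theorem exists_isOpenEmbedding_apply_zero (E : Type*) [NormedAddCommGroup E] [NormedSpace ℝ E]
    {M : Type*} [TopologicalSpace M] [ChartedSpace E M] (p : M) :
    ∃ h : E → M, IsOpenEmbedding h ∧ h 0 = p := by
  let c := chartAt E p
  obtain ⟨s, hs, hball⟩ := Metric.isOpen_iff.1 c.open_target (c p) (mem_chart_target E p)
  let u := OpenPartialHomeomorph.univBall (c p) s
  have hsource : (u.trans c.symm).source = univ := by
    rw [OpenPartialHomeomorph.trans_source, OpenPartialHomeomorph.univBall_source, univ_inter,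
      eq_univ_iff_forall]
    intro x
    have hux : u x ∈ u.target := u.map_source (by simp [u])
    rw [OpenPartialHomeomorph.univBall_target (c p) hs] at hux
    exact hball hux
  refine ⟨u.trans c.symm, (u.trans c.symm).isOpenEmbedding hsource, ?_⟩
  rw [OpenPartialHomeomorph.coe_trans, Function.comp_apply,
    OpenPartialHomeomorph.univBall_apply_zero]
  exact c.left_inv (mem_chart_source E p)

theorem exists_isBallAtlas (n : ℕ) (M : Type u) [TopologicalSpace M] [CompactSpace M]
    [ChartedSpace (EuclideanSpace ℝ (Fin n)) M] :
    ∃ (k : ℕ) (h : Fin k → (Fin n → ℝ) → M), IsBallAtlas h := by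
  let e := (EuclideanSpace.equiv (Fin n) ℝ).symm
  choose h hh hh₀ using exists_isOpenEmbedding_apply_zero (EuclideanSpace ℝ (Fin n)) (M := M)
  have hhe (p) : IsOpenEmbedding (h p ∘ e) := (hh p).comp e.toHomeomorph.isOpenEmbedding
  obtain ⟨t, ht⟩ := isCompact_univ.elim_finite_subcover (fun p => h p ∘ e '' ball 0 1)
    (fun p => (hhe p).isOpenMap _ isOpen_ball) fun p _ => mem_iUnion.2
      ⟨p, 0, mem_ball_self one_pos, by rw [Function.comp_apply, map_zero, hh₀]⟩
  refine ⟨t.card, fun i => h (t.equivFin.symm i) ∘ e, fun i => hhe _, fun p => ?_⟩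
  obtain ⟨q, hq, hp⟩ := mem_iUnion₂.1 (ht (mem_univ p))
  refine ⟨t.equivFin ⟨q, hq⟩, image_mono ball_subset_closedBall ?_⟩
  rwa [Equiv.symm_apply_apply]

end Charts

section Codes

variable {n : ℕ} {κ : Type v} {M N : Type u} {h : κ → (Fin n → ℝ) → M} {g : κ → (Fin n → ℝ) → N}

/-- The cell of the cubical grid of mesh `1 / (m + 1)` in `ℝⁿ` containing a point, as an integer
vector. -/
noncomputable def gridCell (m : ℕ) (x : Fin n → ℝ) : Fin n → ℤ := fun a => ⌊(m + 1) * x a⌋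

theorem dist_le_of_gridCell_eq {m : ℕ} {x y : Fin n → ℝ} (hxy : gridCell m x = gridCell m y) :
    dist x y ≤ 1 / (m + 1) := by
  refine (dist_pi_le_iff (by positivity)).2 fun a => ?_
  have ha := (Int.abs_sub_lt_one_of_floor_eq_floor (congrFun hxy a)).le
  rwa [← mul_sub, abs_mul, abs_of_pos (by positivity : (0 : ℝ) < m + 1), ← le_div_iff₀'
    (by positivity)] at ha

theorem finite_image_gridCell {K : Set (Fin n → ℝ)} (hK : Bornology.IsBounded K) (m : ℕ) :
    (gridCell m '' K).Finite := by
  obtain ⟨R, hR⟩ := hK.subset_closedBall 0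
  refine (Finite.pi' fun _ : Fin n => finite_Icc ⌊(m + 1) * -R⌋ ⌊(m + 1) * R⌋).subset ?_
  rintro _ ⟨x, hx, rfl⟩ a
  have hxa : |x a| ≤ R := (dist_zero_right (x a) ▸ dist_le_pi_dist x 0 a).trans (hR hx)
  have hm : (0 : ℝ) ≤ m + 1 := by positivity
  exact ⟨Int.floor_le_floor (mul_le_mul_of_nonneg_left (abs_le.1 hxa).1 hm),
    Int.floor_le_floor (mul_le_mul_of_nonneg_left (abs_le.1 hxa).2 hm)⟩

/-- The coincidences of `h` between points of the balls of radius `4`, recorded up to the grid of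
mesh `1 / (m + 1)`. -/
def coincidenceCode (m : ℕ) (h : κ → (Fin n → ℝ) → M) : Set ((κ × (Fin n → ℤ)) × κ × (Fin n → ℤ)) :=
  {c | ∃ x ∈ closedBall (0 : Fin n → ℝ) 4, ∃ y ∈ closedBall (0 : Fin n → ℝ) 4,
    h c.1.1 x = h c.2.1 y ∧ gridCell m x = c.1.2 ∧ gridCell m y = c.2.2}

theorem finite_coincidenceCode [Finite κ] (m : ℕ) (h : κ → (Fin n → ℝ) → M) :
    (coincidenceCode m h).Finite := by
  have hcell := (@finite_univ κ _).prod
    (finite_image_gridCell (isBounded_closedBall (x := (0 : Fin n → ℝ)) (r := 4)) m)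
  refine (hcell.prod hcell).subset ?_
  rintro ⟨⟨i, _⟩, j, _⟩ ⟨x, hx, y, hy, -, rfl, rfl⟩
  exact ⟨⟨mem_univ i, x, hx, rfl⟩, mem_univ j, y, hy, rfl⟩

theorem coincidencesNear_of_coincidenceCode_subset {m : ℕ}
    (hc : coincidenceCode m h ⊆ coincidenceCode m g) : CoincidencesNear (1 / (m + 1)) h g :=
  fun i j x hx y hy hxy => by
    obtain ⟨x', -, y', -, hxy', hx', hy'⟩ :=
      @hc ((i, gridCell m x), j, gridCell m y) ⟨x, hx, y, hy, hxy, rfl, rfl⟩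
    exact ⟨x', y', dist_le_of_gridCell_eq hx', dist_le_of_gridCell_eq hy', hxy'⟩

end Codes

section Certificates

/-- The finite data that determine a closed `n`-manifold: the number of charts, the fineness of the
grid and the coincidences of the charts recorded up to this grid. -/
abbrev Certificate (n : ℕ) : Type :=
  Σ k : ℕ, ℕ × Finset ((Fin k × (Fin n → ℤ)) × Fin k × (Fin n → ℤ))

/-- `c` records the coincidences of a ball atlas of `M` which is rigid at the scale of the grid. -/
def IsCertificate {n : ℕ} (M : Type u) [TopologicalSpace M] (c : Certificate n) : Prop :=
  ∃ h : Fin c.1 → (Fin n → ℝ) → M, IsBallAtlas h ∧ IsRigid (1 / (c.2.1 + 1)) h ∧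
    coincidenceCode c.2.1 h = c.2.2

theorem exists_isCertificate (n : ℕ) (M : Type u) [TopologicalSpace M] [T2Space M] [CompactSpace M]
    [ChartedSpace (EuclideanSpace ℝ (Fin n)) M] : ∃ c : Certificate n, IsCertificate M c := by
  obtain ⟨k, h, hh⟩ := exists_isBallAtlas n M
  obtain ⟨δ, hδ, hrigid⟩ := hh.exists_isRigid
  obtain ⟨m, hm⟩ := exists_nat_one_div_lt hδ
  exact ⟨⟨k, m, (finite_coincidenceCode m h).toFinset⟩, h, hh, hrigid.mono hm.le, by simp⟩

theorem IsCertificate.nonempty_homeomorph {n : ℕ} {M N : Type u} [TopologicalSpace M]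
    [TopologicalSpace N] [T2Space N] {c : Certificate n} (hM : IsCertificate M c)
    (hN : IsCertificate N c) : Nonempty (M ≃ₜ N) := by
  obtain ⟨h, -, hrigid, hh⟩ := hM
  obtain ⟨g, hg, -, hgc⟩ := hN
  have hcode : coincidenceCode c.2.1 h = coincidenceCode c.2.1 g := hh.trans hgc.symm
  exact hrigid N g hg (coincidencesNear_of_coincidenceCode_subset hcode.subset)
    (coincidencesNear_of_coincidenceCode_subset hcode.superset)

end Certificates

theorem countably_many_closed_3manifolds_general (n : ℕ) {J : Type v} (M : J → Type u)
    [∀ j, TopologicalSpace (M j)] [∀ j, T2Space (M j)] [∀ j, CompactSpace (M j)]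
    [∀ j, ChartedSpace (EuclideanSpace ℝ (Fin n)) (M j)] :
    ∃ (ι : Type) (f : ι → J), Countable ι ∧ ∀ j, ∃ i, Nonempty (M j ≃ₜ M (f i)) := by
  choose c hc using fun j => exists_isCertificate n (M j)
  refine ⟨range c, rangeSplitting c, inferInstance, fun j => ⟨⟨c j, mem_range_self j⟩, ?_⟩⟩
  have hrep := hc (rangeSplitting c ⟨c j, mem_range_self j⟩)
  rw [apply_rangeSplitting c] at hrep
  exact (hc j).nonempty_homeomorph hrep

/-- Up to homeomorphism there are only countably many closed 3-manifolds: there is a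
countable family of closed 3-manifolds such that every closed 3-manifold is homeomorphic
to a member of the family. -/
theorem countably_many_closed_3manifolds :
    ∃ (ι : Type) (M : ι → Closed3Manifold),
      Countable ι ∧
      ∀ N : Closed3Manifold, ∃ i : ι, Nonempty (N.carrier ≃ₜ (M i).carrier) :=
  countably_many_closed_3manifolds_general 3 Closed3Manifold.carrier
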